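/- arXiv:1810.00254 — 2 statements merged into one kernel-verified Lean document; each statement's English description precedes it below -/
import Mathlib

section
/- Let N be an odd Niemeier lattice of minimum norm 2 whose two even neighbors have root sublattices isometric to E₈⊕E₈⊕E₈ and D₈⊕D₈⊕D₈ respectively. Then N does not contain a sublattice isometric to L⁺. -/
open scoped BigOperators

namespace Niemeier

variable {V : Type*} [AddCommGroup V] [Module ℚ V]
variable {W : Type*} [AddCommGroup W] [Module ℚ W]

/-- The dual lattice of a `ℤ`-submodule `L` of a rational vector space `V` with respect to the
bilinear form `B`: all vectors pairing integrally with every element of `L`. -/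
def dualLattice (B : V →ₗ[ℚ] V →ₗ[ℚ] ℚ) (L : Submodule ℤ V) : Submodule ℤ V where
  carrier := {x | ∀ y ∈ L, ∃ n : ℤ, B x y = n}
  zero_mem' := by
    intro y hy
    exact ⟨0, by simp⟩
  add_mem' := by
    intro a b ha hb y hy
    obtain ⟨m, hm⟩ := ha y hy
    obtain ⟨k, hk⟩ := hb y hy
    exact ⟨m + k, by push_cast [map_add, LinearMap.add_apply, hm, hk]; rfl⟩
  smul_mem' := by
    intro c x hx y hy
    obtain ⟨m, hm⟩ := hx y hy
    refine ⟨c * m, ?_⟩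
    have h1 : B (c • x) y = c • (B x y) := by
      rw [map_zsmul]; rfl
    rw [h1, hm, zsmul_eq_mul]
    push_cast
    ring

/-- `B` is a symmetric positive-definite bilinear form. -/
def IsPosDefSymm (B : V →ₗ[ℚ] V →ₗ[ℚ] ℚ) : Prop :=
  (∀ x y, B x y = B y x) ∧ ∀ x : V, x ≠ 0 → 0 < B x x

/-- `L` is a (full-rank, integral) lattice in `V` with respect to `B`. -/
structure IsIntegralLattice (B : V →ₗ[ℚ] V →ₗ[ℚ] ℚ) (L : Submodule ℤ V) : Prop where
  fg : L.FG
  spans : Submodule.span ℚ (L : Set V) = ⊤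
  integral : L ≤ dualLattice B L

/-- `L` is unimodular: it coincides with its dual lattice. -/
def IsUnimodular (B : V →ₗ[ℚ] V →ₗ[ℚ] ℚ) (L : Submodule ℤ V) : Prop :=
  L = dualLattice B L

/-- `L` is an even lattice: all norms are even integers. -/
def IsEvenLat (B : V →ₗ[ℚ] V →ₗ[ℚ] ℚ) (L : Submodule ℤ V) : Prop :=
  ∀ v ∈ L, ∃ n : ℤ, B v v = 2 * n

/-- `L` is an odd lattice: some vector has odd (integer) norm. -/
def IsOddLat (B : V →ₗ[ℚ] V →ₗ[ℚ] ℚ) (L : Submodule ℤ V) : Prop :=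
  ∃ v ∈ L, ∃ n : ℤ, B v v = 2 * n + 1

/-- An odd Niemeier lattice: an odd positive-definite unimodular integral lattice of rank 24
(positive-definiteness of `B` is a separate hypothesis). -/
def IsOddNiemeier (B : V →ₗ[ℚ] V →ₗ[ℚ] ℚ) (N : Submodule ℤ V) : Prop :=
  IsIntegralLattice B N ∧ IsUnimodular B N ∧ IsOddLat B N ∧ Module.finrank ℚ V = 24

/-- `D` is a subgroup of index two in `L`. -/
def IndexTwo (D L : Submodule ℤ V) : Prop :=
  D ≤ L ∧ ∃ a ∈ L, a ∉ D ∧ ∀ x ∈ L, x ∈ D ∨ x - a ∈ D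

/-- Two lattices are neighbors if their intersection has index two in each of them. -/
def Neighbors (L M : Submodule ℤ V) : Prop :=
  IndexTwo (L ⊓ M) L ∧ IndexTwo (L ⊓ M) M

/-- `E` is an even neighbor of the odd Niemeier lattice `N`: an even unimodular integral
lattice (in the same ambient space) which is a neighbor of `N`. -/
def IsEvenNeighbor (B : V →ₗ[ℚ] V →ₗ[ℚ] ℚ) (N E : Submodule ℤ V) : Prop :=
  IsIntegralLattice B E ∧ IsUnimodular B E ∧ IsEvenLat B E ∧ Neighbors N E

/-- The minimum norm of `L` equals `m`. -/
def HasMinNorm (B : V →ₗ[ℚ] V →ₗ[ℚ] ℚ) (L : Submodule ℤ V) (m : ℚ) : Prop :=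
  (∃ v ∈ L, v ≠ 0 ∧ B v v = m) ∧ ∀ v ∈ L, v ≠ 0 → m ≤ B v v

/-- `N` contains a sublattice isometric to the rank-6 lattice `L⁺`, i.e. there are vectors
`h, a 0, …, a 4` in `N` realizing the Gram matrix of `L⁺`. -/
def ContainsLPlus (B : V →ₗ[ℚ] V →ₗ[ℚ] ℚ) (N : Submodule ℤ V) : Prop :=
  ∃ h ∈ N, ∃ a : Fin 5 → V, (∀ i, a i ∈ N) ∧
    B h h = 2 ∧ (∀ i, B h (a i) = 1) ∧ (∀ i, B (a i) (a i) = 3) ∧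
    ∀ i j, i ≠ j → B (a i) (a j) = 0

/-- Two lattices (in possibly different ambient spaces, with forms `B` and `C`) are isometric:
there is a `ℤ`-linear bijection between them preserving the bilinear forms. -/
def LatticeIsometric (B : V → V → ℚ) (C : W → W → ℚ)
    (L : Submodule ℤ V) (M : Submodule ℤ W) : Prop :=
  ∃ f : L ≃ₗ[ℤ] M, ∀ x y : L, C (f x) (f y) = B x y

/-- The standard dot product on `ℚⁿ`. -/
def stdDot (n : ℕ) : (Fin n → ℚ) → (Fin n → ℚ) → ℚ := fun x y => ∑ i, x i * y i

/-- The orthogonal sum of two bilinear forms. -/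
def prodForm (B : V → V → ℚ) (C : W → W → ℚ) : V × W → V × W → ℚ :=
  fun p q => B p.1 q.1 + C p.2 q.2

/-- A vector in `ℚⁿ` has integer coordinates. -/
def IsIntVec {n : ℕ} (x : Fin n → ℚ) : Prop := ∀ i, ∃ m : ℤ, x i = m

/-- The root lattice `Dₙ = {x ∈ ℤⁿ : ∑ xᵢ even}`. -/
def latD (n : ℕ) : Submodule ℤ (Fin n → ℚ) where
  carrier := {x | IsIntVec x ∧ ∃ k : ℤ, ∑ i, x i = 2 * k}
  zero_mem' := by
    refine ⟨fun i => ⟨0, by simp⟩, 0, by simp⟩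
  add_mem' := by
    rintro a b ⟨ha, k₁, hk₁⟩ ⟨hb, k₂, hk₂⟩
    refine ⟨fun i => ?_, k₁ + k₂, ?_⟩
    · obtain ⟨m, hm⟩ := ha i
      obtain ⟨m', hm'⟩ := hb i
      exact ⟨m + m', by simp [Pi.add_apply, hm, hm']⟩
    · simp only [Pi.add_apply, Finset.sum_add_distrib, hk₁, hk₂]
      push_cast
      ring
  smul_mem' := by
    rintro c x ⟨hx, k, hk⟩
    refine ⟨fun i => ?_, c * k, ?_⟩
    · obtain ⟨m, hm⟩ := hx i
      exact ⟨c * m, by simp [Pi.smul_apply, hm, zsmul_eq_mul]⟩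
    · have : ∑ i, (c • x) i = c • ∑ i, x i := by
        simp [Pi.smul_apply, Finset.smul_sum]
      rw [this, hk, zsmul_eq_mul]
      push_cast
      ring

/-- The root lattice `Aₙ = {x ∈ ℤⁿ⁺¹ : ∑ xᵢ = 0}`. -/
def latA (n : ℕ) : Submodule ℤ (Fin (n + 1) → ℚ) where
  carrier := {x | IsIntVec x ∧ ∑ i, x i = 0}
  zero_mem' := ⟨fun i => ⟨0, by simp⟩, by simp⟩
  add_mem' := by
    rintro a b ⟨ha, hka⟩ ⟨hb, hkb⟩
    refine ⟨fun i => ?_, ?_⟩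
    · obtain ⟨m, hm⟩ := ha i
      obtain ⟨m', hm'⟩ := hb i
      exact ⟨m + m', by simp [Pi.add_apply, hm, hm']⟩
    · simp [Pi.add_apply, Finset.sum_add_distrib, hka, hkb]
  smul_mem' := by
    rintro c x ⟨hx, hk⟩
    refine ⟨fun i => ?_, ?_⟩
    · obtain ⟨m, hm⟩ := hx i
      exact ⟨c * m, by simp [Pi.smul_apply, hm, zsmul_eq_mul]⟩
    · have : ∑ i, (c • x) i = c • ∑ i, x i := by
        simp [Pi.smul_apply, Finset.smul_sum]
      rw [this, hk, smul_zero]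

/-- The root lattice `E₈ = D₈ + ℤ·(½,…,½)`. -/
def latE8 : Submodule ℤ (Fin 8 → ℚ) :=
  latD 8 ⊔ Submodule.span ℤ {fun _ => (1 : ℚ) / 2}

/-- The root sublattice of `E`: the `ℤ`-span of its vectors of norm 2. -/
def rootSublattice (B : V →ₗ[ℚ] V →ₗ[ℚ] ℚ) (E : Submodule ℤ V) : Submodule ℤ V :=
  Submodule.span ℤ {v : V | v ∈ E ∧ B v v = 2}

/-- The set of even-norm vectors of `N` (the even sublattice, as a set). -/
def evenSet (B : V →ₗ[ℚ] V →ₗ[ℚ] ℚ) (N : Submodule ℤ V) : Set V :=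
  {x | x ∈ N ∧ ∃ n : ℤ, B x x = 2 * n}

/-- The unordered pair of root sublattices of `E₁` and `E₂` is isometric to the pair
`(M₁, M₂)`. -/
def RootPairIso {W₁ W₂ : Type*} [AddCommGroup W₁] [Module ℚ W₁]
    [AddCommGroup W₂] [Module ℚ W₂]
    (B : V →ₗ[ℚ] V →ₗ[ℚ] ℚ) (E₁ E₂ : Submodule ℤ V)
    (C₁ : W₁ → W₁ → ℚ) (M₁ : Submodule ℤ W₁)
    (C₂ : W₂ → W₂ → ℚ) (M₂ : Submodule ℤ W₂) : Prop :=
  (LatticeIsometric (fun x y => B x y) C₁ (rootSublattice B E₁) M₁ ∧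
    LatticeIsometric (fun x y => B x y) C₂ (rootSublattice B E₂) M₂) ∨
  (LatticeIsometric (fun x y => B x y) C₂ (rootSublattice B E₁) M₂ ∧
    LatticeIsometric (fun x y => B x y) C₁ (rootSublattice B E₂) M₁)

/-- The unordered pair of root sublattices of `E₁`, `E₂` is one of the four exceptional pairs
`{E₈³, D₈³}`, `{D₁₆⊕E₈, A₁₅⊕D₉}`, `{D₁₂², A₁₂²}`, `{D₂₄, A₂₄}`. -/
def IsExceptionalPair (B : V →ₗ[ℚ] V →ₗ[ℚ] ℚ) (E₁ E₂ : Submodule ℤ V) : Prop :=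
  RootPairIso B E₁ E₂
    (prodForm (stdDot 8) (prodForm (stdDot 8) (stdDot 8))) (latE8.prod (latE8.prod latE8))
    (prodForm (stdDot 8) (prodForm (stdDot 8) (stdDot 8))) ((latD 8).prod ((latD 8).prod (latD 8))) ∨
  RootPairIso B E₁ E₂
    (prodForm (stdDot 16) (stdDot 8)) ((latD 16).prod latE8)
    (prodForm (stdDot 16) (stdDot 9)) ((latA 15).prod (latD 9)) ∨
  RootPairIso B E₁ E₂
    (prodForm (stdDot 12) (stdDot 12)) ((latD 12).prod (latD 12))
    (prodForm (stdDot 13) (stdDot 13)) ((latA 12).prod (latA 12)) ∨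
  RootPairIso B E₁ E₂
    (stdDot 24) (latD 24)
    (stdDot 25) (latA 24)


/-- Integer vectors (as lists) of length `n` with entries in `{-1,0,1}` and norm `m`. -/
def dvecs : ℕ → ℕ → List (List ℤ)
  | 0, 0 => [[]]
  | 0, _ + 1 => []
  | n + 1, 0 => (dvecs n 0).map (fun l => 0 :: l)
  | n + 1, m + 1 => (dvecs n (m + 1)).map (fun l => 0 :: l) ++
      ((dvecs n m).map (fun l => 1 :: l) ++ (dvecs n m).map (fun l => (-1) :: l))

/-- Sign vectors of length `n` with an even (`true`) or odd (`false`) number of minus signs. -/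
def svecs : ℕ → Bool → List (List ℤ)
  | 0, true => [[]]
  | 0, false => []
  | n + 1, b => (svecs n b).map (fun l => 1 :: l) ++ (svecs n (!b)).map (fun l => (-1) :: l)

/-- The roots of `D₈`. -/
def rootsD : List (List ℤ) := dvecs 8 2

/-- The roots of `E₈`, multiplied by two. -/
def rootsE : List (List ℤ) := rootsD.map (fun l => l.map (fun a => 2 * a)) ++ svecs 8 true

theorem dvecs_nodup (n m : ℕ) : (dvecs n m).Nodup := by
  induction n generalizing m with
  | zero => cases m <;> simp [dvecs]
  | succ n ih =>
    have hinj : ∀ a : ℤ, Function.Injective (fun l : List ℤ => a :: l) := by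
      intro a l l' h
      simpa using h
    cases m with
    | zero => exact (ih 0).map (hinj 0)
    | succ m =>
      rw [dvecs, List.nodup_append', List.nodup_append']
      refine ⟨(ih _).map (hinj _), ⟨(ih _).map (hinj _), (ih _).map (hinj _), ?_⟩, ?_⟩
      · intro l h1 h2
        simp only [List.mem_map] at h1 h2
        obtain ⟨a, -, rfl⟩ := h1
        obtain ⟨b, -, h⟩ := h2
        simp at h
      · intro l h1 h2
        simp only [List.mem_map, List.mem_append] at h1 h2
        obtain ⟨a, -, rfl⟩ := h1
        rcases h2 with ⟨b, -, h⟩ | ⟨b, -, h⟩ <;> simp at h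

theorem svecs_nodup (n : ℕ) (b : Bool) : (svecs n b).Nodup := by
  induction n generalizing b with
  | zero => cases b <;> simp [svecs]
  | succ n ih =>
    have hinj : ∀ a : ℤ, Function.Injective (fun l : List ℤ => a :: l) := by
      intro a l l' h
      simpa using h
    rw [svecs, List.nodup_append']
    refine ⟨(ih _).map (hinj _), (ih _).map (hinj _), ?_⟩
    intro l h1 h2
    simp only [List.mem_map] at h1 h2
    obtain ⟨a, -, rfl⟩ := h1
    obtain ⟨b, -, h⟩ := h2
    simp at h

theorem dvecs_complete (n : ℕ) (m : ℕ) (hm : m ≤ 3) (l : List ℤ) (hl : l.length = n)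
    (hs : (l.map (fun a => a ^ 2)).sum = (m : ℤ)) : l ∈ dvecs n m := by
  induction n generalizing m l with
  | zero =>
    obtain rfl : l = [] := List.length_eq_zero_iff.mp hl
    simp at hs
    have : m = 0 := by omega
    subst this
    simp [dvecs]
  | succ n ih =>
    cases l with
    | nil => simp at hl
    | cons a t =>
      simp only [List.length_cons, Nat.add_right_cancel_iff] at hl
      simp only [List.map_cons, List.sum_cons] at hs
      have hnn : 0 ≤ (t.map (fun a => a ^ 2)).sum := by
        apply List.sum_nonneg
        intro x hx
        simp only [List.mem_map] at hx
        obtain ⟨y, -, rfl⟩ := hx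
        positivity
      have h1 : a ≤ 1 := by
        by_contra h
        have : (2 : ℤ) ≤ a := by omega
        have : (m : ℤ) ≤ 3 := by exact_mod_cast hm
        nlinarith
      have h2 : -1 ≤ a := by
        by_contra h
        have : a ≤ -2 := by omega
        have : (m : ℤ) ≤ 3 := by exact_mod_cast hm
        nlinarith
      have h3 : a = 0 ∨ a = 1 ∨ a = -1 := by omega
      cases m with
      | zero =>
        have : a = 0 := by
          rcases h3 with rfl | rfl | rfl
          · rfl
          · simp at hs; omega
          · simp at hs; omega
        subst this
        simp only [dvecs, List.mem_map]
        exact ⟨t, ih 0 (by omega) t hl (by simpa using hs), rfl⟩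
      | succ m =>
        simp only [dvecs, List.mem_append, List.mem_map]
        rcases h3 with rfl | rfl | rfl
        · left
          exact ⟨t, ih _ hm t hl (by simpa using hs), rfl⟩
        · right; left
          exact ⟨t, ih m (by omega) t hl (by push_cast at hs; linarith), rfl⟩
        · right; right
          exact ⟨t, ih m (by omega) t hl (by push_cast at hs; linarith), rfl⟩

theorem rootsD_nodup : rootsD.Nodup := dvecs_nodup 8 2

theorem rootsE_nodup : rootsE.Nodup := by
  rw [rootsE, List.nodup_append']
  refine ⟨rootsD_nodup.map ?_, svecs_nodup _ _, ?_⟩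
  · apply List.map_injective_iff.mpr
    intro a b h
    simpa using h
  · have h1 : ∀ l ∈ rootsD.map (fun l => l.map (fun a => 2 * a)), l.getD 0 0 % 2 = 0 := by
      decide +kernel
    have h2 : ∀ l ∈ svecs 8 true, l.getD 0 0 % 2 = 1 := by
      decide +kernel
    intro l h3 h4
    have := h1 l h3
    have := h2 l h4
    omega

theorem rootsE_len : rootsE.length = 240 := by decide +kernel

theorem rootsD_m2 : ∀ i j : Fin 8,
    (rootsD.map (fun l => l.getD i 0 * l.getD j 0)).sum = if i = j then 28 else 0 := by
  decide +kernel

theorem rootsE_m2 : ∀ i j : Fin 8,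
    (rootsE.map (fun l => l.getD i 0 * l.getD j 0)).sum = if i = j then 240 else 0 := by
  decide +kernel

theorem rootsE_ok : ∀ l ∈ rootsE, l.length = 8 ∧
    (∀ i : Fin 8, l.getD i 0 % 2 = l.getD 0 0 % 2) ∧
    (∑ i : Fin 8, l.getD i 0) % 4 = 0 ∧ (∑ i : Fin 8, l.getD i 0 ^ 2) = 8 := by
  decide +kernel

/-- Fourth moments of the (doubled) roots of `E₈`. -/
def tm4 (i j k m : Fin 8) : ℤ :=
  (rootsE.map (fun l => l.getD i 0 * l.getD j 0 * (l.getD k 0 * l.getD m 0))).sum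

/-- The expected value of the fourth moments. -/
def dm4 (i j k m : Fin 8) : ℤ :=
  192 * ((if i = j then if k = m then 1 else 0 else 0)
    + (if i = k then if j = m then 1 else 0 else 0)
    + (if i = m then if j = k then 1 else 0 else 0))

theorem m4_sorted : ∀ i j k m : Fin 8, i ≤ j → j ≤ k → k ≤ m → tm4 i j k m = dm4 i j k m := by
  decide +kernel

theorem m4_s1 {i j k m : Fin 8} (h : tm4 i j k m = dm4 i j k m) :
    tm4 j i k m = dm4 j i k m := by
  have h1 : tm4 j i k m = tm4 i j k m := by
    unfold tm4
    congr 2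
    funext l
    ring
  rw [h1, h]
  unfold dm4
  grind

theorem m4_s2 {i j k m : Fin 8} (h : tm4 i j k m = dm4 i j k m) :
    tm4 i k j m = dm4 i k j m := by
  have h1 : tm4 i k j m = tm4 i j k m := by
    unfold tm4
    congr 2
    funext l
    ring
  rw [h1, h]
  unfold dm4
  grind

theorem m4_s3 {i j k m : Fin 8} (h : tm4 i j k m = dm4 i j k m) :
    tm4 i j m k = dm4 i j m k := by
  have h1 : tm4 i j m k = tm4 i j k m := by
    unfold tm4
    congr 2
    funext l
    ring
  rw [h1, h]
  unfold dm4
  grind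

theorem m4_all (i j k m : Fin 8) : tm4 i j k m = dm4 i j k m := by
  wlog h1 : i ≤ j generalizing i j k m
  · exact m4_s1 (this j i k m (le_of_not_ge h1))
  wlog h2 : k ≤ m generalizing i j k m
  · exact m4_s3 (this i j m k h1 (le_of_not_ge h2))
  -- make `i` the least
  wlog h3 : i ≤ k generalizing i j k m
  · exact m4_s2 (m4_s1 (m4_s3 (m4_s2 (this k m i j h2 h1 (le_of_not_ge h3)))))
  rcases le_total j k with h4 | h4
  · exact m4_sorted i j k m h1 h4 h2
  · rcases le_total j m with h5 | h5
    · exact m4_s2 (m4_sorted i k j m h3 h4 h5)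
    · exact m4_s2 (m4_s3 (m4_sorted i k m j h3 h2 h5))

attribute [irreducible] rootsE rootsD

/-- The rational vector attached to a list of integers. -/
def lv (l : List ℤ) : Fin 8 → ℚ := fun i => (l.getD i 0 : ℚ)

/-- Half of the rational vector attached to a list of integers. -/
def hv (l : List ℤ) : Fin 8 → ℚ := fun i => (l.getD i 0 : ℚ) / 2

theorem sumD_m2 (i j : Fin 8) :
    ∑ l ∈ rootsD.toFinset, lv l i * lv l j = if i = j then 28 else 0 := by
  have h := rootsD_m2 i j
  rw [← List.sum_toFinset _ rootsD_nodup] at h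
  have h' := congrArg (fun z : ℤ => (z : ℚ)) h
  simp only [lv]
  push_cast at h'
  exact h'

theorem sumE_m2 (i j : Fin 8) :
    ∑ l ∈ rootsE.toFinset, hv l i * hv l j = if i = j then 60 else 0 := by
  have h := rootsE_m2 i j
  rw [← List.sum_toFinset _ rootsE_nodup] at h
  have h' := congrArg (fun z : ℤ => (z : ℚ) / 4) h
  simp only [hv]
  push_cast at h'
  rw [Finset.sum_div] at h'
  calc _ = _ := Finset.sum_congr rfl (fun l _ => by ring)
    _ = _ := h'
    _ = _ := by split_ifs <;> norm_num

theorem sumE_m4 (i j k m : Fin 8) :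
    ∑ l ∈ rootsE.toFinset, hv l i * hv l j * (hv l k * hv l m) =
      12 * ((if i = j then if k = m then 1 else 0 else 0)
    + (if i = k then if j = m then 1 else 0 else 0)
    + (if i = m then if j = k then 1 else 0 else 0)) := by
  have h := m4_all i j k m
  unfold tm4 dm4 at h
  rw [← List.sum_toFinset _ rootsE_nodup] at h
  have h' := congrArg (fun z : ℤ => (z : ℚ) / 16) h
  simp only [hv]
  push_cast at h'
  rw [Finset.sum_div] at h'
  calc _ = _ := Finset.sum_congr rfl (fun l _ => by ring)
    _ = _ := h'
    _ = _ := by ring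

theorem quad_exp (S : Finset (List ℤ)) (r : List ℤ → Fin 8 → ℚ) (u v : Fin 8 → ℚ) :
    ∑ l ∈ S, stdDot 8 (r l) u * stdDot 8 (r l) v =
      ∑ i, ∑ j, (∑ l ∈ S, r l i * r l j) * (u i * v j) := by
  simp only [stdDot, Finset.sum_mul_sum]
  simp only [Finset.sum_mul]
  rw [Finset.sum_comm]
  refine Finset.sum_congr rfl fun i _ => ?_
  rw [Finset.sum_comm]
  refine Finset.sum_congr rfl fun j _ => ?_
  refine Finset.sum_congr rfl fun l _ => ?_
  ring

theorem momD (u : Fin 8 → ℚ) :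
    ∑ l ∈ rootsD.toFinset, (stdDot 8 (lv l) u) ^ 2 = 28 * stdDot 8 u u := by
  simp only [sq]
  rw [quad_exp]
  simp only [sumD_m2, ite_mul, zero_mul, Finset.sum_ite_eq, Finset.mem_univ, if_true]
  rw [stdDot, Finset.mul_sum]

theorem momE2 (u : Fin 8 → ℚ) :
    ∑ l ∈ rootsE.toFinset, (stdDot 8 (hv l) u) ^ 2 = 60 * stdDot 8 u u := by
  simp only [sq]
  rw [quad_exp]
  simp only [sumE_m2, ite_mul, zero_mul, Finset.sum_ite_eq, Finset.mem_univ, if_true]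
  rw [stdDot, Finset.mul_sum]

theorem momE4 (u v : Fin 8 → ℚ) :
    ∑ l ∈ rootsE.toFinset, (stdDot 8 (hv l) u) ^ 2 * (stdDot 8 (hv l) v) ^ 2 =
      12 * (stdDot 8 u u * stdDot 8 v v + 2 * (stdDot 8 u v) ^ 2) := by
  have h1 : ∀ l, (stdDot 8 (hv l) u) ^ 2 * (stdDot 8 (hv l) v) ^ 2 =
      ∑ i, ∑ j, ∑ k, ∑ m, (hv l i * hv l j * (hv l k * hv l m)) * (u i * u j * (v k * v m)) := by
    intro l
    simp only [stdDot, sq, Finset.sum_mul_sum]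
    refine Finset.sum_congr rfl fun i _ => ?_
    rw [Finset.sum_comm]
    refine Finset.sum_congr rfl fun j _ =>
      Finset.sum_congr rfl fun k _ => Finset.sum_congr rfl fun m _ => ?_
    ring
  have h2 : ∑ l ∈ rootsE.toFinset, (stdDot 8 (hv l) u) ^ 2 * (stdDot 8 (hv l) v) ^ 2 =
      ∑ i, ∑ j, ∑ k, ∑ m, (∑ l ∈ rootsE.toFinset, hv l i * hv l j * (hv l k * hv l m)) *
        (u i * u j * (v k * v m)) := by
    simp only [h1]
    rw [Finset.sum_comm]
    refine Finset.sum_congr rfl fun i _ => ?_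
    rw [Finset.sum_comm]
    refine Finset.sum_congr rfl fun j _ => ?_
    rw [Finset.sum_comm]
    refine Finset.sum_congr rfl fun k _ => ?_
    rw [Finset.sum_comm]
    refine Finset.sum_congr rfl fun m _ => ?_
    rw [Finset.sum_mul]
  rw [h2]
  simp only [sumE_m4]
  have h3 : ∀ i j k m : Fin 8, (12 * ((if i = j then if k = m then 1 else 0 else 0)
      + (if i = k then if j = m then 1 else 0 else 0)
      + (if i = m then if j = k then 1 else 0 else 0)) : ℚ) * (u i * u j * (v k * v m)) =
      12 * ((if i = j then if k = m then u i * u j * (v k * v m) else 0 else 0)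
      + (if i = k then if j = m then u i * u j * (v k * v m) else 0 else 0)
      + (if i = m then if j = k then u i * u j * (v k * v m) else 0 else 0)) := by
    intro i j k m
    rw [mul_assoc]
    congr 1
    simp only [add_mul, ite_mul, one_mul, zero_mul]
  simp only [h3, ← Finset.mul_sum, Finset.sum_add_distrib]
  congr 1
  have e1 : ∑ i : Fin 8, ∑ j : Fin 8, ∑ k : Fin 8, ∑ m : Fin 8,
      (if i = j then if k = m then u i * u j * (v k * v m) else 0 else 0) =
      stdDot 8 u u * stdDot 8 v v := by
    simp only [stdDot, Finset.sum_mul_sum]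
    refine Finset.sum_congr rfl fun i _ => ?_
    rw [Finset.sum_comm]
    refine Finset.sum_congr rfl fun k _ => ?_
    rw [Finset.sum_comm]
    simp
  have e2 : ∑ i : Fin 8, ∑ j : Fin 8, ∑ k : Fin 8, ∑ m : Fin 8,
      (if i = k then if j = m then u i * u j * (v k * v m) else 0 else 0) =
      (stdDot 8 u v) ^ 2 := by
    simp only [stdDot, sq, Finset.sum_mul_sum]
    refine Finset.sum_congr rfl fun i _ => Finset.sum_congr rfl fun j _ => ?_
    rw [Finset.sum_comm]
    simp
    ring
  have e3 : ∑ i : Fin 8, ∑ j : Fin 8, ∑ k : Fin 8, ∑ m : Fin 8,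
      (if i = m then if j = k then u i * u j * (v k * v m) else 0 else 0) =
      (stdDot 8 u v) ^ 2 := by
    simp only [stdDot, sq, Finset.sum_mul_sum]
    refine Finset.sum_congr rfl fun i _ => Finset.sum_congr rfl fun j _ => ?_
    simp
    ring
  rw [e1, e2, e3]
  ring

/-- The key lower bound in `E₈`. -/
theorem lowerE (u : Fin 8 → ℚ) (hu : stdDot 8 u u ≤ 2)
    (hintg : ∀ l ∈ rootsE, ∃ n : ℤ, stdDot 8 (hv l) u = n)
    (hnorm : ∀ l ∈ rootsE, stdDot 8 (hv l) (hv l) = 2) :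
    ∃ s ∈ rootsE, stdDot 8 (hv s) u = 0 ∧
      72 ≤ ∑ l ∈ rootsE.toFinset.filter (fun l => stdDot 8 (hv l) u = 0),
        (stdDot 8 (hv l) (hv s)) ^ 2 := by
  have hintg' : ∀ l ∈ rootsE, stdDot 8 (hv l) u ≠ 0 → 1 ≤ (stdDot 8 (hv l) u) ^ 2 := by
    intro l hl h
    obtain ⟨n, hn⟩ := hintg l hl
    rw [hn] at h ⊢
    have h0 : n ≠ 0 := by
      rintro rfl
      simp at h
    have : 1 ≤ n ^ 2 := by
      have := sq_nonneg n
      have : n ^ 2 ≠ 0 := pow_ne_zero 2 h0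
      omega
    exact_mod_cast this
  have hcard : rootsE.toFinset.card = 240 := by
    rw [List.toFinset_card_of_nodup rootsE_nodup, rootsE_len]
  have hex : ∃ s ∈ rootsE, stdDot 8 (hv s) u = 0 := by
    by_contra hcon
    push Not at hcon
    have h1 : ∑ l ∈ rootsE.toFinset, (1 : ℚ) ≤ ∑ l ∈ rootsE.toFinset, (stdDot 8 (hv l) u) ^ 2 := by
      refine Finset.sum_le_sum fun l hl => ?_
      rw [List.mem_toFinset] at hl
      exact hintg' l hl (hcon l hl)
    rw [momE2, Finset.sum_const, hcard] at h1
    norm_num at h1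
    linarith
  obtain ⟨s, hs, hsu⟩ := hex
  refine ⟨s, hs, hsu, ?_⟩
  have hus : stdDot 8 u (hv s) = 0 := by
    rw [← hsu]
    simp only [stdDot]
    exact Finset.sum_congr rfl fun i _ => mul_comm _ _
  have h2 := momE2 (hv s)
  have h4 := momE4 u (hv s)
  rw [hnorm s hs] at h2 h4
  rw [hus] at h4
  have h5 : ∑ l ∈ rootsE.toFinset, (stdDot 8 (hv l) (hv s)) ^ 2 -
      ∑ l ∈ rootsE.toFinset, (stdDot 8 (hv l) u) ^ 2 * (stdDot 8 (hv l) (hv s)) ^ 2 ≤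
      ∑ l ∈ rootsE.toFinset.filter (fun l => stdDot 8 (hv l) u = 0),
        (stdDot 8 (hv l) (hv s)) ^ 2 := by
    rw [← Finset.sum_sub_distrib, Finset.sum_filter]
    refine Finset.sum_le_sum fun l hl => ?_
    rw [List.mem_toFinset] at hl
    split_ifs with h
    · rw [h]
      simp
    · have := hintg' l hl h
      nlinarith [sq_nonneg (stdDot 8 (hv l) (hv s))]
  rw [h2, h4] at h5
  linarith

theorem memD_root (y : Fin 8 → ℚ) (hy : y ∈ latD 8) (h2 : stdDot 8 y y = 2) :
    ∃ l ∈ rootsD, y = lv l := by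
  obtain ⟨hi, -⟩ := hy
  choose m hm using hi
  refine ⟨List.ofFn m, ?_, ?_⟩
  · rw [rootsD]
    apply dvecs_complete 8 2 (by norm_num)
    · simp
    · rw [List.map_ofFn, List.sum_ofFn]
      have : (∑ i, (m i : ℚ) * m i) = 2 := by
        rw [← h2]
        simp only [stdDot, hm]
      have h3 : ∑ i, m i * m i = 2 := by exact_mod_cast this
      simpa [sq] using h3
  · funext i
    rw [hm i, lv]
    simp [List.getD_eq_getElem?_getD, -List.ofFn_succ]

theorem latD_even (n : ℕ) (y : Fin n → ℚ) (hy : y ∈ latD n) : ∃ k : ℤ, stdDot n y y = 2 * k := by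
  obtain ⟨hi, k, hk⟩ := hy
  choose m hm using hi
  have h1 : ∑ i, m i = 2 * k := by
    have : ∑ i, (m i : ℚ) = 2 * k := by
      rw [← hk]
      simp only [hm]
    exact_mod_cast this
  have h2 : (2 : ℤ) ∣ ∑ i, m i * m i - ∑ i, m i := by
    rw [← Finset.sum_sub_distrib]
    refine Finset.dvd_sum fun i _ => ?_
    have := Int.even_mul_pred_self (m i)
    rw [← mul_sub_one]
    exact this.two_dvd
  obtain ⟨c, hc⟩ := h2
  refine ⟨c + k, ?_⟩
  have h3 : ∑ i, m i * m i = 2 * (c + k) := by linarith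
  simp only [stdDot, hm]
  exact_mod_cast h3

theorem memE8_of (k : Fin 8 → ℤ) (hk : ∀ i, k i % 2 = k 0 % 2) (hs : (∑ i, k i) % 4 = 0) :
    (fun i => (k i : ℚ) / 2) ∈ latE8 := by
  rcases Int.emod_two_eq_zero_or_one (k 0) with h0 | h0
  · apply Submodule.mem_sup_left
    have : ∀ i, ∃ m : ℤ, k i = 2 * m := fun i => ⟨k i / 2, by have := hk i; omega⟩
    choose m hm using this
    refine ⟨fun i => ⟨m i, by simp [hm i]⟩, ?_⟩
    simp only [hm, ← Finset.mul_sum] at hs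
    refine ⟨(∑ i, m i) / 2, ?_⟩
    have h1 : ∑ i, m i = 2 * ((∑ i, m i) / 2) := by omega
    have h2 : ∑ i, (m i : ℚ) = 2 * (((∑ i, m i) / 2 : ℤ) : ℚ) := by exact_mod_cast h1
    rw [← h2]
    refine Finset.sum_congr rfl fun i _ => ?_
    show (k i : ℚ) / 2 = m i
    rw [hm i]
    push_cast
    ring
  · have : ∀ i, ∃ m : ℤ, k i = 2 * m + 1 := fun i => ⟨k i / 2, by have := hk i; omega⟩
    choose m hm using this
    simp only [hm, ← Finset.mul_sum, Finset.sum_add_distrib, Finset.sum_const, Finset.card_univ,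
      Fintype.card_fin] at hs
    norm_num at hs
    have hd : (fun i => (m i : ℚ)) ∈ latD 8 := by
      refine ⟨fun i => ⟨m i, rfl⟩, (∑ i, m i) / 2, ?_⟩
      have h1 : ∑ i, m i = 2 * ((∑ i, m i) / 2) := by omega
      show ∑ i, (m i : ℚ) = _
      exact_mod_cast h1
    have : (fun i => (k i : ℚ) / 2) = (fun i => (m i : ℚ)) + fun _ => (1 : ℚ) / 2 := by
      funext i
      simp only [hm, Pi.add_apply]
      push_cast
      ring
    rw [this]
    exact Submodule.add_mem_sup hd (Submodule.subset_span rfl)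

/-- Norms of vectors pairing integrally with `E₈` are even. -/
theorem dualE8_even (p : Fin 8 → ℚ) (hp : ∀ x ∈ latE8, ∃ n : ℤ, stdDot 8 x p = n) :
    ∃ k : ℤ, stdDot 8 p p = 2 * k := by
  have hpm : ∀ i : Fin 8, ∃ n : ℤ, 2 * p i = n := by
    intro i
    have hmem : (fun j => ((if j = i then 4 else 0 : ℤ) : ℚ) / 2) ∈ latE8 := by
      apply memE8_of
      · intro j
        split_ifs <;> rfl
      · simp
    obtain ⟨n, hn⟩ := hp _ hmem
    refine ⟨n, ?_⟩
    rw [← hn]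
    simp [stdDot, ite_div]
    norm_num
  choose k hk using hpm
  have hpk : ∀ i, p i = (k i : ℚ) / 2 := fun i => by linarith [hk i]
  have hpar : ∀ i, k i % 2 = k 0 % 2 := by
    intro i
    by_cases hi : i = 0
    · rw [hi]
    have hmem : (fun j => ((if j = i then 2 else if j = 0 then 2 else 0 : ℤ) : ℚ) / 2) ∈ latE8 := by
      apply memE8_of
      · intro j
        split_ifs <;> rfl
      · revert hi
        revert i
        decide
    obtain ⟨n, hn⟩ := hp _ hmem
    have h1 : stdDot 8 (fun j => ((if j = i then 2 else if j = 0 then 2 else 0 : ℤ) : ℚ) / 2) p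
        = p i + p 0 := by
      have : ∀ j, ((if j = i then 2 else if j = 0 then 2 else 0 : ℤ) : ℚ) / 2 * p j =
          (if j = i then p j else 0) + (if j = 0 then p j else 0) := by
        intro j
        by_cases h1 : j = i
        · subst h1
          simp [hi]
        · by_cases h2 : j = 0 <;> simp [h1, h2]
          intro h3
          exact absurd h3.symm hi
      simp only [stdDot, this, Finset.sum_add_distrib, Finset.sum_ite_eq', Finset.mem_univ, if_true]
    rw [h1, hpk, hpk] at hn
    have h2 : (k i : ℚ) + k 0 = 2 * n := by linarith
    have h3 : k i + k 0 = 2 * n := by exact_mod_cast h2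
    omega
  have hsum : (∑ i, k i) % 4 = 0 := by
    have hmem : (fun _ => ((1 : ℤ) : ℚ) / 2 : Fin 8 → ℚ) ∈ latE8 :=
      memE8_of (fun _ => 1) (fun _ => rfl) (by simp)
    obtain ⟨n, hn⟩ := hp _ hmem
    simp only [stdDot, hpk, ← Finset.mul_sum, ← Finset.sum_div] at hn
    have h1 : (∑ i, (k i : ℚ)) = 4 * n := by
      push_cast at hn
      linarith
    have h2 : ∑ i, k i = 4 * n := by exact_mod_cast h1
    omega
  rcases Int.emod_two_eq_zero_or_one (k 0) with h0 | h0
  · have : ∀ i, ∃ m : ℤ, k i = 2 * m := fun i => ⟨k i / 2, by have := hpar i; omega⟩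
    choose m hm using this
    have hd : p ∈ latD 8 := by
      refine ⟨fun i => ⟨m i, by rw [hpk, hm]; push_cast; ring⟩, ?_⟩
      simp only [hm, ← Finset.mul_sum] at hsum
      refine ⟨(∑ i, m i) / 2, ?_⟩
      have h1 : ∑ i, m i = 2 * ((∑ i, m i) / 2) := by omega
      have h2 : ∑ i, (m i : ℚ) = 2 * (((∑ i, m i) / 2 : ℤ) : ℚ) := by exact_mod_cast h1
      rw [← h2]
      refine Finset.sum_congr rfl fun i _ => ?_
      rw [hpk, hm i]
      push_cast
      ring
    exact latD_even 8 p hd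
  · have : ∀ i, ∃ m : ℤ, k i = 2 * m + 1 := fun i => ⟨k i / 2, by have := hpar i; omega⟩
    choose m hm using this
    have h2 : (2 : ℤ) ∣ ∑ i, m i * (m i + 1) := by
      refine Finset.dvd_sum fun i _ => ?_
      exact (Int.even_mul_succ_self (m i)).two_dvd
    obtain ⟨c, hc⟩ := h2
    refine ⟨c + 1, ?_⟩
    have h3 : ∑ i, (m i : ℚ) * (m i + 1) = 2 * c := by exact_mod_cast hc
    have h4 : ∀ i, p i * p i = (m i : ℚ) * (m i + 1) + 1 / 4 := by
      intro i
      rw [hpk, hm]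
      push_cast
      ring
    simp only [stdDot, h4, Finset.sum_add_distrib, h3]
    simp
    norm_num
    ring

theorem hv_mem (l : List ℤ) (hl : l ∈ rootsE) : hv l ∈ latE8 := by
  obtain ⟨-, h1, h2, -⟩ := rootsE_ok l hl
  exact memE8_of (fun i => l.getD i 0) h1 h2

theorem hv_norm (l : List ℤ) (hl : l ∈ rootsE) : stdDot 8 (hv l) (hv l) = 2 := by
  obtain ⟨-, -, -, h⟩ := rootsE_ok l hl
  have h' : ∑ i : Fin 8, (l.getD i 0 : ℚ) ^ 2 = 8 := by exact_mod_cast h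
  have : stdDot 8 (hv l) (hv l) = (∑ i : Fin 8, (l.getD i 0 : ℚ) ^ 2) / 4 := by
    rw [Finset.sum_div]
    simp only [stdDot, hv]
    exact Finset.sum_congr rfl fun i _ => by ring
  rw [this, h']
  norm_num

theorem hv_inj (l l' : List ℤ) (hl : l ∈ rootsE) (hl' : l' ∈ rootsE) (h : hv l = hv l') :
    l = l' := by
  have h1 := (rootsE_ok l hl).1
  have h2 := (rootsE_ok l' hl').1
  apply List.ext_getElem (by rw [h1, h2])
  intro n hn hn'
  have h3 := congrFun h ⟨n, by omega⟩
  simp only [hv] at h3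
  have h4 : ((l.getD n 0 : ℤ) : ℚ) = (l'.getD n 0 : ℤ) := by linarith
  have h5 : l.getD n 0 = l'.getD n 0 := by exact_mod_cast h4
  simpa [List.getD_eq_getElem?_getD, hn, hn'] using h5

/-- Embedding of `ℚ⁸` as the `j`-th summand of `ℚ⁸ ⊕ ℚ⁸ ⊕ ℚ⁸`. -/
def inc (j : Fin 3) (x : Fin 8 → ℚ) : (Fin 8 → ℚ) × ((Fin 8 → ℚ) × (Fin 8 → ℚ)) :=
  if j = 0 then (x, 0, 0) else if j = 1 then (0, x, 0) else (0, 0, x)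

/-- Projection to the `j`-th summand of `ℚ⁸ ⊕ ℚ⁸ ⊕ ℚ⁸`. -/
def prj (j : Fin 3) (w : (Fin 8 → ℚ) × ((Fin 8 → ℚ) × (Fin 8 → ℚ))) : Fin 8 → ℚ :=
  if j = 0 then w.1 else if j = 1 then w.2.1 else w.2.2

theorem inc_mem (M : Submodule ℤ (Fin 8 → ℚ)) (j : Fin 3) (x : Fin 8 → ℚ) (hx : x ∈ M) :
    inc j x ∈ M.prod (M.prod M) := by
  fin_cases j <;> simp [inc, Submodule.mem_prod, hx]

theorem prj_mem (M : Submodule ℤ (Fin 8 → ℚ)) (j : Fin 3) (w) (hw : w ∈ M.prod (M.prod M)) :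
    prj j w ∈ M := by
  simp only [Submodule.mem_prod] at hw
  fin_cases j <;> simp [prj, hw]

theorem prod_inc (j k : Fin 3) (x y : Fin 8 → ℚ) :
    prodForm (stdDot 8) (prodForm (stdDot 8) (stdDot 8)) (inc j x) (inc k y) =
      if j = k then stdDot 8 x y else 0 := by
  fin_cases j <;> fin_cases k <;> simp [inc, prodForm, stdDot]

theorem prod_prj (w w' : (Fin 8 → ℚ) × ((Fin 8 → ℚ) × (Fin 8 → ℚ))) :
    prodForm (stdDot 8) (prodForm (stdDot 8) (stdDot 8)) w w' =
      ∑ j, stdDot 8 (prj j w) (prj j w') := by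
  simp [Fin.sum_univ_three, prj, prodForm, add_assoc]

theorem single_memE8 (i : Fin 8) : (Pi.single i (2 : ℚ) : Fin 8 → ℚ) ∈ latE8 := by
  apply Submodule.mem_sup_left
  refine ⟨fun j => ?_, 1, ?_⟩
  · by_cases h : j = i
    · subst h
      exact ⟨2, by simp⟩
    · exact ⟨0, by simp [h]⟩
  · simp

theorem dataE {V : Type*} [AddCommGroup V] [Module ℚ V]
    (B : V →ₗ[ℚ] V →ₗ[ℚ] ℚ) (hB : IsPosDefSymm B) (hdim : Module.finrank ℚ V = 24)
    (R : Submodule ℤ V)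
    (hr : LatticeIsometric (fun x y => B x y)
      (prodForm (stdDot 8) (prodForm (stdDot 8) (stdDot 8)))
      R (latE8.prod (latE8.prod latE8))) :
    ∃ (P : Fin 3 → V →ₗ[ℚ] (Fin 8 → ℚ)) (G : Fin 3 → (Fin 8 → ℚ) → V),
      (∀ y z, B y z = ∑ j, stdDot 8 (P j y) (P j z)) ∧
      (∀ j, ∀ x ∈ latE8, G j x ∈ R) ∧
      (∀ j, ∀ x ∈ latE8, ∀ y, B (G j x) y = stdDot 8 x (P j y)) ∧
      (∀ j, ∀ x ∈ latE8, ∀ y ∈ latE8, B (G j x) (G j y) = stdDot 8 x y) := by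
  classical
  obtain ⟨f, hf⟩ := hr
  let G : Fin 3 → (Fin 8 → ℚ) → V := fun j x =>
    if h : x ∈ latE8 then (f.symm ⟨inc j x, inc_mem _ j x h⟩ : V) else 0
  have hG : ∀ j k x y, x ∈ latE8 → y ∈ latE8 →
      B (G j x) (G k y) = if j = k then stdDot 8 x y else 0 := by
    intro j k x y hx hy
    have h1 := hf (f.symm ⟨inc j x, inc_mem _ j x hx⟩) (f.symm ⟨inc k y, inc_mem _ k y hy⟩)
    simp only [LinearEquiv.apply_symm_apply] at h1
    simp only [G, hx, hy, dif_pos]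
    rw [← h1, prod_inc]
  let g : Fin 3 × Fin 8 → V := fun p => G p.1 (Pi.single p.2 2)
  have hg : ∀ p q, B (g p) (g q) = if p = q then 4 else 0 := by
    rintro ⟨j, i⟩ ⟨k, i'⟩
    simp only [g]
    rw [hG _ _ _ _ (single_memE8 _) (single_memE8 _)]
    by_cases h1 : j = k
    · by_cases h2 : i = i'
      · subst h1 h2
        simp [stdDot, Pi.single_apply]
        norm_num
      · simp [h1, h2, stdDot, Pi.single_apply, Ne.symm h2]
    · simp [h1]
  have hli : LinearIndependent ℚ g := by
    rw [Fintype.linearIndependent_iff]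
    intro c hc p
    have h1 : B (∑ q, c q • g q) (g p) = 0 := by rw [hc]; simp
    simp only [map_sum, LinearMap.sum_apply, map_smul, LinearMap.smul_apply, hg, smul_eq_mul,
      mul_ite, mul_zero, Finset.sum_ite_eq', Finset.mem_univ, if_true] at h1
    linarith
  let b := basisOfLinearIndependentOfCardEqFinrank hli (by simp [hdim])
  have hb : ∀ p, b p = g p := fun p => by simp [b]
  have hexp : ∀ y, y = ∑ p, (B y (g p) / 4) • g p := by
    intro y
    have h1 := b.sum_repr y
    simp only [hb] at h1
    have h2 : ∀ p, B y (g p) = 4 * b.repr y p := by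
      intro p
      conv_lhs => rw [← h1]
      simp only [map_sum, LinearMap.sum_apply, map_smul, LinearMap.smul_apply, hg, smul_eq_mul,
        mul_ite, mul_zero, Finset.sum_ite_eq', Finset.mem_univ, if_true]
      ring
    conv_lhs => rw [← h1]
    refine Finset.sum_congr rfl fun p _ => ?_
    rw [h2 p]
    congr 1
    ring
  let P : Fin 3 → V →ₗ[ℚ] (Fin 8 → ℚ) := fun j =>
    LinearMap.pi fun i => (1 / 2 : ℚ) • B.flip (g (j, i))
  have hP : ∀ j y i, P j y i = B y (g (j, i)) / 2 := by
    intro j y i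
    simp [P]
    ring
  have hBP : ∀ y z, B y z = ∑ j, stdDot 8 (P j y) (P j z) := by
    intro y z
    conv_lhs => rw [hexp y]
    simp only [map_sum, LinearMap.sum_apply, map_smul, LinearMap.smul_apply, smul_eq_mul, stdDot,
      hP]
    rw [Fintype.sum_prod_type]
    refine Finset.sum_congr rfl fun j _ => Finset.sum_congr rfl fun i _ => ?_
    rw [hB.1 (g (j, i)) z]
    ring
  have hPG : ∀ j k x, x ∈ latE8 → P j (G k x) = if j = k then x else 0 := by
    intro j k x hx
    funext i
    rw [hP]
    simp only [g]
    rw [hG _ _ _ _ hx (single_memE8 i)]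
    by_cases h : j = k
    · simp [h, stdDot, Pi.single_apply]
    · simp [h, Ne.symm h]
  refine ⟨P, G, hBP, ?_, ?_, ?_⟩
  · intro j x hx
    simp only [G, hx, dif_pos]
    exact Subtype.mem _
  · intro j x hx y
    rw [hBP, Finset.sum_eq_single j]
    · rw [hPG _ _ _ hx]
      simp
    · intro k _ hk
      rw [hPG _ _ _ hx]
      simp [hk, stdDot]
    · simp
  · intro j x hx y hy
    rw [hG _ _ _ _ hx hy]
    simp

theorem dataD {V : Type*} [AddCommGroup V] [Module ℚ V]
    (B : V →ₗ[ℚ] V →ₗ[ℚ] ℚ) (hB : IsPosDefSymm B)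
    (R : Submodule ℤ V)
    (hr : LatticeIsometric (fun x y => B x y)
      (prodForm (stdDot 8) (prodForm (stdDot 8) (stdDot 8)))
      R ((latD 8).prod ((latD 8).prod (latD 8)))) :
    ∃ Q : V → Fin 3 → Fin 8 → ℚ,
      (∀ z ∈ R, ∀ j, Q z j ∈ latD 8) ∧
      (∀ z ∈ R, ∀ w ∈ R, B z w = ∑ j, stdDot 8 (Q z j) (Q w j)) ∧
      (∀ z ∈ R, ∀ w ∈ R, Q z = Q w → z = w) := by
  classical
  obtain ⟨f, hf⟩ := hr
  let Q : V → Fin 3 → Fin 8 → ℚ := fun z j => if h : z ∈ R then prj j (f ⟨z, h⟩ : _ × _) else 0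
  have hQ : ∀ z ∈ R, ∀ w ∈ R, B z w = ∑ j, stdDot 8 (Q z j) (Q w j) := by
    intro z hz w hw
    have h1 := hf ⟨z, hz⟩ ⟨w, hw⟩
    rw [prod_prj] at h1
    simp only [Q, hz, hw, dif_pos]
    exact h1.symm
  refine ⟨Q, ?_, hQ, ?_⟩
  · intro z hz j
    simp only [Q, hz, dif_pos]
    exact prj_mem _ j _ (f ⟨z, hz⟩).2
  · intro z hz w hw h
    by_contra hne
    have h1 := hB.2 (z - w) (sub_ne_zero.mpr hne)
    simp only [map_sub, LinearMap.sub_apply] at h1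
    rw [hQ z hz z hz, hQ z hz w hw, hQ w hw z hz, hQ w hw w hw, h] at h1
    simp at h1

theorem stdDot_self_nonneg (x : Fin 8 → ℚ) : 0 ≤ stdDot 8 x x :=
  Finset.sum_nonneg fun i _ => mul_self_nonneg _

theorem stdDot_self_eq_zero (x : Fin 8 → ℚ) (h : stdDot 8 x x = 0) : x = 0 := by
  rw [stdDot, Finset.sum_eq_zero_iff_of_nonneg fun i _ => mul_self_nonneg _] at h
  funext i
  exact mul_self_eq_zero.mp (h i (Finset.mem_univ i))

/-- Three nonnegative even numbers with sum two. -/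
theorem even_two (q : Fin 3 → ℚ) (h0 : ∀ j, 0 ≤ q j) (he : ∀ j, ∃ k : ℤ, q j = 2 * k)
    (hs : ∑ j, q j = 2) : ∃ j, q j = 2 ∧ ∀ k, k ≠ j → q k = 0 := by
  choose k hk using he
  rw [Fin.sum_univ_three] at hs
  have hk0 : ∀ j, 0 ≤ k j := by
    intro j
    have := h0 j
    rw [hk j] at this
    have h2 : (0 : ℚ) ≤ k j := by linarith
    exact_mod_cast h2
  have hs' : k 0 + k 1 + k 2 = 1 := by
    rw [hk 0, hk 1, hk 2] at hs
    have : (k 0 + k 1 + k 2 : ℚ) = 1 := by linarith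
    exact_mod_cast this
  have a0 := hk0 0
  have a1 := hk0 1
  have a2 := hk0 2
  have hc : (k 0 = 1 ∧ k 1 = 0 ∧ k 2 = 0) ∨ (k 0 = 0 ∧ k 1 = 1 ∧ k 2 = 0) ∨
      (k 0 = 0 ∧ k 1 = 0 ∧ k 2 = 1) := by omega
  rcases hc with ⟨b0, b1, b2⟩ | ⟨b0, b1, b2⟩ | ⟨b0, b1, b2⟩
  · refine ⟨0, by simp [hk, b0], fun j hj => ?_⟩
    fin_cases j <;> simp_all
  · refine ⟨1, by simp [hk, b1], fun j hj => ?_⟩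
    fin_cases j <;> simp_all
  · refine ⟨2, by simp [hk, b2], fun j hj => ?_⟩
    fin_cases j <;> simp_all

/-- The key upper bound in `D₈ ⊕ D₈ ⊕ D₈`. -/
theorem upperD (S : Finset (List ℤ)) (η : List ℤ → Fin 3 → Fin 8 → ℚ)
    (hD : ∀ l ∈ S, ∀ j, η l j ∈ latD 8)
    (hn : ∀ l ∈ S, ∑ j, stdDot 8 (η l j) (η l j) = 2)
    (hinj : ∀ l ∈ S, ∀ l' ∈ S, η l = η l' → l = l') (s : List ℤ) (hs : s ∈ S) :
    ∑ l ∈ S, (∑ j, stdDot 8 (η l j) (η s j)) ^ 2 ≤ 56 := by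
  classical
  have hblock : ∀ l ∈ S, ∃ j, stdDot 8 (η l j) (η l j) = 2 ∧ ∀ k, k ≠ j → η l k = 0 := by
    intro l hl
    obtain ⟨j, h1, h2⟩ := even_two (fun j => stdDot 8 (η l j) (η l j))
      (fun j => stdDot_self_nonneg _) (fun j => latD_even 8 _ (hD l hl j)) (hn l hl)
    exact ⟨j, h1, fun k hk => stdDot_self_eq_zero _ (h2 k hk)⟩
  obtain ⟨j, hj, hj0⟩ := hblock s hs
  have h1 : ∀ l, ∑ k, stdDot 8 (η l k) (η s k) = stdDot 8 (η l j) (η s j) := by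
    intro l
    rw [Finset.sum_eq_single j]
    · intro k _ hk
      rw [hj0 k hk]
      simp [stdDot]
    · simp
  simp only [h1]
  have h2 : ∑ l ∈ S, (stdDot 8 (η l j) (η s j)) ^ 2 =
      ∑ l ∈ S.filter (fun l => η l j ≠ 0), (stdDot 8 (η l j) (η s j)) ^ 2 := by
    rw [Finset.sum_filter]
    refine Finset.sum_congr rfl fun l _ => ?_
    split_ifs with h
    · rfl
    · push Not at h
      rw [h]
      simp [stdDot]
  have h3 : ∀ l ∈ S.filter (fun l => η l j ≠ 0),
      stdDot 8 (η l j) (η l j) = 2 ∧ ∀ k, k ≠ j → η l k = 0 := by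
    intro l hl
    rw [Finset.mem_filter] at hl
    obtain ⟨k, hk, hk0⟩ := hblock l hl.1
    have : j = k := by
      by_contra hne
      exact hl.2 (hk0 j hne)
    subst this
    exact ⟨hk, hk0⟩
  have h4 : ∀ l ∈ S.filter (fun l => η l j ≠ 0), ∃ m ∈ rootsD, η l j = lv m := fun l hl =>
    memD_root _ (hD l (Finset.mem_filter.mp hl).1 j) (h3 l hl).1
  choose! m hm hm' using h4
  have h5 : Set.InjOn m (S.filter (fun l => η l j ≠ 0)) := by
    intro l hl l' hl' h
    have hl := Finset.mem_coe.mp hl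
    have hl' := Finset.mem_coe.mp hl'
    apply hinj l (Finset.mem_filter.mp hl).1 l' (Finset.mem_filter.mp hl').1
    funext k
    by_cases hk : k = j
    · rw [hk, hm' l hl, hm' l' hl', h]
    · rw [(h3 l hl).2 k hk, (h3 l' hl').2 k hk]
  calc ∑ l ∈ S, (stdDot 8 (η l j) (η s j)) ^ 2
      = ∑ l ∈ S.filter (fun l => η l j ≠ 0), (stdDot 8 (lv (m l)) (η s j)) ^ 2 := by
        rw [h2]
        exact Finset.sum_congr rfl fun l hl => by rw [hm' l hl]
    _ = ∑ t ∈ (S.filter (fun l => η l j ≠ 0)).image m, (stdDot 8 (lv t) (η s j)) ^ 2 := by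
        rw [Finset.sum_image h5]
    _ ≤ ∑ t ∈ rootsD.toFinset, (stdDot 8 (lv t) (η s j)) ^ 2 := by
        apply Finset.sum_le_sum_of_subset_of_nonneg
        · intro t ht
          rw [Finset.mem_image] at ht
          obtain ⟨l, hl, rfl⟩ := ht
          exact List.mem_toFinset.mpr (hm l hl)
        · intros
          positivity
    _ = 56 := by
        rw [momD, hj]
        norm_num

theorem stdDot_eq (x y : Fin 8 → ℚ) : stdDot 8 x y = x ⬝ᵥ y := rfl

section lattice

variable {V : Type*} [AddCommGroup V] [Module ℚ V]

theorem nb_sub {N E : Submodule ℤ V} (h : Neighbors N E) {x y : V} (hx : x ∈ N) (hy : y ∈ N)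
    (hx' : x ∉ E) (hy' : y ∉ E) : x - y ∈ E := by
  obtain ⟨⟨-, c, hc, hc', hall⟩, -⟩ := h
  have h1 : x - c ∈ N ⊓ E := (hall x hx).resolve_left fun h => hx' h.2
  have h2 : y - c ∈ N ⊓ E := (hall y hy).resolve_left fun h => hy' h.2
  have h3 := E.sub_mem h1.2 h2.2
  simpa using h3

theorem nb_two {N E : Submodule ℤ V} (h : Neighbors N E) {x : V} (hx : x ∈ N) : x + x ∈ E := by
  by_cases hxE : x ∈ E
  · exact E.add_mem hxE hxE
  · by_cases hxE' : -x ∈ E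
    · exact absurd (by simpa using E.neg_mem hxE') hxE
    · simpa using nb_sub h hx (N.neg_mem hx) hxE hxE'

theorem odd_not_mem (B : V →ₗ[ℚ] V →ₗ[ℚ] ℚ) {E : Submodule ℤ V} (hE : IsEvenLat B E) {x : V}
    {n : ℤ} (hx : B x x = 2 * n + 1) : x ∉ E := by
  intro h
  obtain ⟨k, hk⟩ := hE x h
  rw [hx] at hk
  have : 2 * n + 1 = 2 * k := by exact_mod_cast hk
  omega

/-- Norm-two vectors of `N` lie in every even neighbor. -/
theorem two_mem (B : V →ₗ[ℚ] V →ₗ[ℚ] ℚ) (hB : IsPosDefSymm B) {N E : Submodule ℤ V}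
    (hN : N ≤ dualLattice B N) (hE : IsEvenNeighbor B N E) {a x : V} (ha : a ∈ N)
    (ha3 : B a a = 3) (hx : x ∈ N) (hx2 : B x x = 2) : x ∈ E := by
  by_contra hxE
  have haE : a ∉ E := odd_not_mem B hE.2.2.1 (n := 1) (by rw [ha3]; norm_num)
  obtain ⟨m, hm⟩ := hN ha x hx
  refine odd_not_mem B hE.2.2.1 (n := 2 - m) (x := a - x) ?_ (nb_sub hE.2.2.2 ha hx haE hxE)
  simp only [map_sub, LinearMap.sub_apply]
  rw [hB.1 x a, ha3, hx2, hm]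
  push_cast
  ring

/-- Vectors of an even neighbor pairing integrally with an odd vector lie in `N`. -/
theorem mem_of_int (B : V →ₗ[ℚ] V →ₗ[ℚ] ℚ) {N E : Submodule ℤ V}
    (hN : N ≤ dualLattice B N) (hE : IsEvenNeighbor B N E) {a x : V} (ha : a ∈ N)
    (ha3 : B a a = 3) (hx : x ∈ E) (hax : ∃ n : ℤ, B a x = n) : x ∈ N := by
  have haE : a ∉ E := odd_not_mem B hE.2.2.1 (n := 1) (by rw [ha3]; norm_num)
  by_contra hxN
  apply haE
  rw [hE.2.1]
  obtain ⟨-, c, hc, hc', hall⟩ := hE.2.2.2.2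
  intro y hy
  have hxc : x - c ∈ N ⊓ E := (hall x hx).resolve_left fun h => hxN h.1
  obtain ⟨n, hn⟩ := hax
  obtain ⟨m, hm⟩ := hN ha (x - c) hxc.1
  have hac : B a c = n - m := by
    rw [map_sub, hn] at hm
    linarith
  rcases hall y hy with h | h
  · exact hN ha y h.1
  · obtain ⟨k, hk⟩ := hN ha (y - c) h.1
    refine ⟨k + n - m, ?_⟩
    rw [map_sub, hac] at hk
    push_cast
    linarith

end lattice

theorem sum_three (j : Fin 3) : ∃ j1 j2 : Fin 3, j1 ≠ j ∧ j2 ≠ j ∧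
    ∀ f : Fin 3 → ℚ, ∑ k, f k = f j + f j1 + f j2 := by
  fin_cases j
  · exact ⟨1, 2, by decide, by decide, fun f => by simp [Fin.sum_univ_three]⟩
  · exact ⟨0, 2, by decide, by decide, fun f => by simp [Fin.sum_univ_three]; ring⟩
  · exact ⟨0, 1, by decide, by decide, fun f => by simp [Fin.sum_univ_three]; ring⟩

/-- Among five vectors, no three of which are pairwise distinct, three are equal. -/
theorem pigeon {X : Type*} (c : Fin 5 → X)
    (h : ∀ i j k, c i ≠ c j → c i ≠ c k → c j ≠ c k → False) :
    ∃ p q r, p ≠ q ∧ p ≠ r ∧ q ≠ r ∧ c p = c q ∧ c p = c r ∧ c q = c r := by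
  classical
  obtain ⟨b, hb⟩ := Fintype.exists_lt_card_fiber_of_mul_lt_card (n := 2)
    (fun i => decide (c i = c 0)) (by simp)
  rw [Finset.two_lt_card] at hb
  obtain ⟨p, hp, q, hq, r, hr, h1, h2, h3⟩ := hb
  simp only [Finset.mem_filter, Finset.mem_univ, true_and] at hp hq hr
  have key : ∀ i j, decide (c i = c 0) = b → decide (c j = c 0) = b → c i = c j := by
    intro i j hi hj
    cases b
    · simp only [decide_eq_false_iff_not] at hi hj
      by_contra hne
      exact h i j 0 hne hi hj
    · simp only [decide_eq_true_eq] at hi hj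
      rw [hi, hj]
  exact ⟨p, q, r, h1, h2, h3, key p q hp hq, key p r hp hr, key q r hq hr⟩

theorem unit_one (x y : Fin 8 → ℚ) (hx : stdDot 8 x x = 1) (hy : stdDot 8 y y = 1)
    (h : stdDot 8 x y = 1) : x = y := by
  apply sub_eq_zero.mp
  apply stdDot_self_eq_zero
  rw [stdDot_eq] at *
  rw [sub_dotProduct, dotProduct_sub, dotProduct_sub, dotProduct_comm y x, hx, hy, h]
  norm_num

theorem unit_neg_one (x y : Fin 8 → ℚ) (hx : stdDot 8 x x = 1) (hy : stdDot 8 y y = 1)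
    (h : stdDot 8 x y = -1) : x = -y := by
  apply unit_one x (-y) hx
  · rw [stdDot_eq] at *
    simpa using hy
  · rw [stdDot_eq] at *
    rw [dotProduct_neg, h]
    norm_num

theorem unit_int (x y : Fin 8 → ℚ) (hx : stdDot 8 x x = 1) (hy : stdDot 8 y y = 1)
    (h : ∃ k : ℤ, stdDot 8 (x - y) (x - y) = 2 * k) :
    ∃ n : ℤ, stdDot 8 x y = n ∧ -1 ≤ n ∧ n ≤ 1 := by
  obtain ⟨k, hk⟩ := h
  have h1 : stdDot 8 (x - y) (x - y) = 2 - 2 * stdDot 8 x y := by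
    rw [stdDot_eq] at *
    rw [stdDot_eq, sub_dotProduct, dotProduct_sub, dotProduct_sub, dotProduct_comm y x, hx, hy]
    ring
  have h2 : stdDot 8 (x + y) (x + y) = 2 + 2 * stdDot 8 x y := by
    rw [stdDot_eq] at *
    rw [stdDot_eq, add_dotProduct, dotProduct_add, dotProduct_add, dotProduct_comm y x, hx, hy]
    ring
  have h3 := stdDot_self_nonneg (x - y)
  have h4 := stdDot_self_nonneg (x + y)
  have h5 : stdDot 8 x y = ((1 - k : ℤ) : ℚ) := by
    push_cast
    linarith
  refine ⟨1 - k, h5, ?_, ?_⟩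
  · have : (-1 : ℚ) ≤ ((1 - k : ℤ) : ℚ) := by linarith
    exact_mod_cast this
  · have : ((1 - k : ℤ) : ℚ) ≤ 1 := by linarith
    exact_mod_cast this

theorem no_three (h x y z : Fin 8 → ℚ) (hh : stdDot 8 h h = 2) (hx : stdDot 8 x x = 1)
    (hy : stdDot 8 y y = 1) (hz : stdDot 8 z z = 1) (hhx : stdDot 8 h x = 1)
    (hhy : stdDot 8 h y = 1) (hhz : stdDot 8 h z = 1) (hxy : stdDot 8 x y = 0)
    (hxz : stdDot 8 x z = 0) (hyz : stdDot 8 y z = 0) : False := by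
  have h1 := stdDot_self_nonneg (h - x - y - z)
  rw [stdDot_eq] at *
  simp only [sub_dotProduct, dotProduct_sub, dotProduct_comm x h, dotProduct_comm y h,
    dotProduct_comm z h, dotProduct_comm y x, dotProduct_comm z x, dotProduct_comm z y,
    hh, hx, hy, hz, hhx, hhy, hhz, hxy, hxz, hyz] at h1
  norm_num at h1

/-- An odd Niemeier lattice of minimum norm 2 whose two even neighbors have root
sublattices isometric to `E₈⊕E₈⊕E₈` and `D₈⊕D₈⊕D₈` respectively does not contain `L⁺`. -/
theorem stmt5 {V : Type*} [AddCommGroup V] [Module ℚ V]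
    (B : V →ₗ[ℚ] V →ₗ[ℚ] ℚ) (hB : IsPosDefSymm B)
    (N : Submodule ℤ V) (hN : IsOddNiemeier B N)
    (hmin : HasMinNorm B N 2)
    (E₁ E₂ : Submodule ℤ V) (hne : E₁ ≠ E₂)
    (hE₁ : IsEvenNeighbor B N E₁) (hE₂ : IsEvenNeighbor B N E₂)
    (hr₁ : LatticeIsometric (fun x y => B x y)
      (prodForm (stdDot 8) (prodForm (stdDot 8) (stdDot 8)))
      (rootSublattice B E₁) (latE8.prod (latE8.prod latE8)))
    (hr₂ : LatticeIsometric (fun x y => B x y)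
      (prodForm (stdDot 8) (prodForm (stdDot 8) (stdDot 8)))
      (rootSublattice B E₂) ((latD 8).prod ((latD 8).prod (latD 8)))) :
    ¬ ContainsLPlus B N := by
  rintro ⟨h, hh, a, ha, hh2, hha, ha3, haa⟩
  have hNint := hN.1.integral
  obtain ⟨P, G, hBP, hGR, hGP, hGG⟩ := dataE B hB hN.2.2.2 _ hr₁
  obtain ⟨Q, hQD, hQB, hQinj⟩ := dataD B hB _ hr₂
  have hR1 : rootSublattice B E₁ ≤ E₁ := Submodule.span_le.mpr fun v hv => hv.1
  have hGE : ∀ j, ∀ x ∈ latE8, G j x ∈ E₁ := fun j x hx => hR1 (hGR j x hx)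
  -- blocks of vectors of `E₁` pair integrally with `E₈`
  have hpair : ∀ y ∈ E₁, ∀ j, ∀ x ∈ latE8, ∃ n : ℤ, stdDot 8 x (P j y) = n := by
    intro y hy j x hx
    obtain ⟨n, hn⟩ := hE₁.1.integral (hGE j x hx) y hy
    exact ⟨n, by rw [← hGP j x hx, hn]⟩
  have heven : ∀ y ∈ E₁, ∀ j, ∃ k : ℤ, stdDot 8 (P j y) (P j y) = 2 * k :=
    fun y hy j => dualE8_even _ (hpair y hy j)
  -- blocks of norm-three vectors have norm at least one
  have hge : ∀ v ∈ N, B v v = 3 → ∀ j, 1 ≤ stdDot 8 (P j v) (P j v) := by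
    intro v hv hv3 j
    have h2v : v + v ∈ E₁ := nb_two hE₁.2.2.2 hv
    obtain ⟨k, hk⟩ := heven _ h2v j
    have hk' : stdDot 8 (P j (v + v)) (P j (v + v)) = 4 * stdDot 8 (P j v) (P j v) := by
      rw [map_add, stdDot_eq, stdDot_eq, add_dotProduct, dotProduct_add]
      ring
    by_contra hlt
    push Not at hlt
    have hle : stdDot 8 (P j (v + v)) (P j (v + v)) ≤ 2 := by
      have h1 : (2 * k : ℚ) < 4 := by linarith
      have h2 : 2 * k < 4 := by exact_mod_cast h1
      have h3 : k ≤ 1 := by omega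
      have h4 : (k : ℚ) ≤ 1 := by exact_mod_cast h3
      rw [hk]
      linarith
    obtain ⟨s, hs, hs0, hsum⟩ := lowerE (P j (v + v)) hle
      (fun l hl => hpair _ h2v j _ (hv_mem l hl)) hv_norm
    set S := rootsE.toFinset.filter (fun l => stdDot 8 (Niemeier.hv l) (P j (v + v)) = 0) with hS
    have hSE : ∀ l ∈ S, l ∈ rootsE ∧ stdDot 8 (Niemeier.hv l) (P j (v + v)) = 0 := by
      intro l hl
      rw [hS, Finset.mem_filter, List.mem_toFinset] at hl
      exact hl
    have hR2 : ∀ l ∈ S, G j (Niemeier.hv l) ∈ rootSublattice B E₂ := by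
      intro l hl
      obtain ⟨hl1, hl2⟩ := hSE l hl
      have hm := hv_mem l hl1
      have hnorm : B (G j (Niemeier.hv l)) (G j (Niemeier.hv l)) = 2 := by
        rw [hGG j _ hm _ hm, hv_norm l hl1]
      have hN' : G j (Niemeier.hv l) ∈ N := by
        refine mem_of_int B hNint hE₁ hv hv3 (hGE j _ hm) ⟨0, ?_⟩
        have h1 := hGP j _ hm (v + v)
        rw [hl2, map_add] at h1
        rw [hB.1 v]
        push_cast
        linarith
      exact Submodule.subset_span ⟨two_mem B hB hNint hE₂ hv hv3 hN' hnorm, hnorm⟩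
    have hsS : s ∈ S := by
      rw [hS, Finset.mem_filter, List.mem_toFinset]
      exact ⟨hs, hs0⟩
    have hup := upperD S (fun l => Q (G j (Niemeier.hv l)))
      (fun l hl => hQD _ (hR2 l hl))
      (fun l hl => by
        have hm := hv_mem l (hSE l hl).1
        rw [← hQB _ (hR2 l hl) _ (hR2 l hl), hGG j _ hm _ hm, hv_norm l (hSE l hl).1])
      (fun l hl l' hl' heq => by
        have h1 := hQinj _ (hR2 l hl) _ (hR2 l' hl') heq
        apply hv_inj l l' (hSE l hl).1 (hSE l' hl').1
        have hm := hv_mem l (hSE l hl).1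
        have hm' := hv_mem l' (hSE l' hl').1
        apply sub_eq_zero.mp
        apply stdDot_self_eq_zero
        have e1 := hGG j _ hm _ hm
        have e2 := hGG j _ hm _ hm'
        have e3 := hGG j _ hm' _ hm'
        rw [h1] at e1 e2
        rw [stdDot_eq] at *
        rw [sub_dotProduct, dotProduct_sub, dotProduct_sub,
          dotProduct_comm (Niemeier.hv l') (Niemeier.hv l), ← e1, ← e2, ← e3]
        ring) s hsS
    have heq : ∑ l ∈ S, (∑ k, stdDot 8 (Q (G j (Niemeier.hv l)) k)
        (Q (G j (Niemeier.hv s)) k)) ^ 2 =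
        ∑ l ∈ S, (stdDot 8 (Niemeier.hv l) (Niemeier.hv s)) ^ 2 := by
      refine Finset.sum_congr rfl fun l hl => ?_
      rw [← hQB _ (hR2 l hl) _ (hR2 s hsS), hGG j _ (hv_mem l (hSE l hl).1) _ (hv_mem s hs)]
    rw [heq] at hup
    linarith
  -- hence they all have norm one
  have hone : ∀ i j, stdDot 8 (P j (a i)) (P j (a i)) = 1 := by
    intro i j
    have h1 := hBP (a i) (a i)
    obtain ⟨j1, j2, -, -, hsum⟩ := sum_three j
    rw [ha3, hsum] at h1
    have := hge _ (ha i) (ha3 i) j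
    have := hge _ (ha i) (ha3 i) j1
    have := hge _ (ha i) (ha3 i) j2
    linarith
  have haE : ∀ i, a i ∉ E₁ := fun i =>
    odd_not_mem B hE₁.2.2.1 (n := 1) (by rw [ha3]; norm_num)
  have hintg : ∀ i k j, ∃ n : ℤ, stdDot 8 (P j (a i)) (P j (a k)) = n ∧ -1 ≤ n ∧ n ≤ 1 := by
    intro i k j
    apply unit_int _ _ (hone i j) (hone k j)
    rw [← map_sub]
    exact heven _ (nb_sub hE₁.2.2.2 (ha i) (ha k) (haE i) (haE k)) j
  choose t ht htl htu using hintg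
  -- the block of `h`
  have hhE : h ∈ E₁ := two_mem B hB hNint hE₁ (ha 0) (ha3 0) hh hh2
  obtain ⟨j, hj, hj0⟩ := even_two (fun j => stdDot 8 (P j h) (P j h))
    (fun j => stdDot_self_nonneg _) (fun j => heven h hhE j) (by rw [← hBP, hh2])
  have hj0' : ∀ k, k ≠ j → P k h = 0 := fun k hk => stdDot_self_eq_zero _ (hj0 k hk)
  obtain ⟨j1, j2, hj1, hj2, hsum⟩ := sum_three j
  have hhx : ∀ i, stdDot 8 (P j h) (P j (a i)) = 1 := by
    intro i
    have h1 := hBP h (a i)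
    rw [hha, hsum, hj0' j1 hj1, hj0' j2 hj2] at h1
    simp only [stdDot_eq, zero_dotProduct] at h1 ⊢
    linarith
  have hdich : ∀ i k, P j (a i) ≠ P j (a k) → stdDot 8 (P j (a i)) (P j (a k)) = 0 := by
    intro i k hne
    have h1 := htl i k j
    have h2 := htu i k j
    have h3 : t i k j ≠ 1 := by
      intro h3
      apply hne
      apply unit_one _ _ (hone i j) (hone k j)
      rw [ht, h3]
      norm_num
    have h4 : t i k j ≠ -1 := by
      intro h4
      have h5 := unit_neg_one _ _ (hone i j) (hone k j) (by rw [ht, h4]; norm_num)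
      have h6 := hhx i
      rw [h5, stdDot_eq, dotProduct_neg, ← stdDot_eq, hhx k] at h6
      norm_num at h6
    have h5 : t i k j = 0 := by omega
    rw [ht, h5]
    norm_num
  obtain ⟨p, q, r, hpq, hpr, hqr, epq, epr, eqr⟩ := pigeon (fun i => P j (a i))
    (fun i k l h1 h2 h3 => no_three _ _ _ _ hj (hone i j) (hone k j) (hone l j)
      (hhx i) (hhx k) (hhx l) (hdich i k h1) (hdich i l h2) (hdich k l h3))
  have hrel : ∀ i k, i ≠ k → P j (a i) = P j (a k) → t i k j1 + t i k j2 = -1 := by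
    intro i k hik heq
    have h1 := hBP (a i) (a k)
    rw [haa i k hik, hsum, heq, hone k j, ht, ht] at h1
    have h2 : (t i k j1 + t i k j2 : ℚ) = -1 := by linarith
    exact_mod_cast h2
  have htri : ∀ i k l j, t k i j = -1 → t k l j = -1 → t i l j = 1 := by
    intro i k l j h1 h2
    have h3 := unit_neg_one _ _ (hone k j) (hone i j) (by rw [ht, h1]; norm_num)
    have h4 := unit_neg_one _ _ (hone k j) (hone l j) (by rw [ht, h2]; norm_num)
    have h5 : P j (a i) = P j (a l) := by
      rw [h3] at h4
      exact neg_injective h4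
    have h6 := ht i l j
    rw [h5, hone l j] at h6
    exact_mod_cast h6.symm
  have hsymm : ∀ i k j, t i k j = t k i j := by
    intro i k j
    have h1 := ht i k j
    rw [stdDot_eq, dotProduct_comm, ← stdDot_eq, ht k i j] at h1
    exact_mod_cast h1.symm
  have r1 := hrel p q hpq epq
  have r2 := hrel p r hpr epr
  have r3 := hrel q r hqr eqr
  have c1 := htri q p r j1
  have c2 := htri q p r j2
  have c3 := htri p q r j1
  have c4 := htri p q r j2
  have c5 := htri p r q j1
  have c6 := htri p r q j2
  have s1 := hsymm q p j1
  have s2 := hsymm q p j2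
  have s3 := hsymm r p j1
  have s4 := hsymm r p j2
  have s5 := hsymm r q j1
  have s6 := hsymm r q j2
  have l1 := htl p q j1
  have l2 := htl p q j2
  have l3 := htl p r j1
  have l4 := htl p r j2
  have l5 := htl q r j1
  have l6 := htl q r j2
  omega

end Niemeier
end

section
/- Every odd Niemeier lattice N has exactly two even neighbors, and both of them contain the even sublattice N₀ = {x ∈ N : (x,x) even}, which has index 2 in N. -/
open scoped BigOperators

namespace Niemeier

variable {V : Type*} [AddCommGroup V] [Module ℚ V]
variable {W : Type*} [AddCommGroup W] [Module ℚ W]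

open Complex Filter Topology in
theorem aux_cpow_mul (r : ℝ) (hr : 0 < r) (x : ℂ) (hx : x ≠ 0) :
    ((r : ℂ) * x) ^ (1 / 2 : ℂ) = (r : ℂ) ^ (1 / 2 : ℂ) * x ^ (1 / 2 : ℂ) := by
  have hr' : (r : ℂ) ≠ 0 := by exact_mod_cast hr.ne'
  rw [cpow_def_of_ne_zero (mul_ne_zero hr' hx), cpow_def_of_ne_zero hr', cpow_def_of_ne_zero hx,
    log_ofReal_mul hr hx, ← Complex.exp_add, add_mul, ofReal_log hr.le]

open Complex Filter Topology in
theorem aux_theta_S (τ : ℂ) :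
    jacobiTheta τ = 1 / (-I * τ) ^ (1 / 2 : ℂ) * jacobiTheta (-1 / τ) := by
  rw [jacobiTheta_eq_jacobiTheta₂, jacobiTheta₂_functional_equation, jacobiTheta_eq_jacobiTheta₂]
  simp

open Complex Filter Topology in
theorem aux_theta_period (τ : ℂ) (n : ℕ) : jacobiTheta (τ + 2 * n) = jacobiTheta τ := by
  induction n with
  | zero => simp
  | succ n ih =>
    rw [← ih, ← jacobiTheta_two_add (τ + 2 * n)]
    congr 1
    push_cast
    ring

open Complex Filter Topology in
theorem aux_theta_eq (a : ℕ) (ha : 0 < a) (he : Even a) (ε : ℝ) (hε : 0 < ε) :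
    (ε : ℂ) ^ (1 / 2 : ℂ) * jacobiTheta (1 / a + I * ε) =
      1 / (-I * (1 / a + I * ε)) ^ (1 / 2 : ℂ) * (1 / ((a : ℂ) / (1 / a + I * ε)) ^ (1 / 2 : ℂ)) *
        jacobiTheta (-(1 / a) + I * ((1 / ((a : ℝ) ^ 2 * ε) : ℝ) : ℂ)) := by
  have ha' : (a : ℂ) ≠ 0 := by exact_mod_cast ha.ne'
  have hε' : (ε : ℂ) ≠ 0 := by exact_mod_cast hε.ne'
  set τ : ℂ := 1 / a + I * ε with hτ
  have hτ0 : τ ≠ 0 := by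
    intro h
    have := congrArg Complex.im h
    simp [hτ] at this
    exact hε.ne' this
  have h2 : jacobiTheta (-1 / τ) = jacobiTheta (a * I * ε / τ) := by
    obtain ⟨b, hb⟩ := he
    rw [← aux_theta_period (-1 / τ) b]
    congr 1
    have hb' : (2 : ℂ) * b = a := by rw [hb]; push_cast; ring
    rw [hb']
    field_simp
    rw [hτ]
    field_simp
    ring
  have h3 : -1 / (a * I * ε / τ) = -(1 / a) + I * ((1 / ((a : ℝ) ^ 2 * ε) : ℝ) : ℂ) := by
    push_cast
    rw [hτ]
    have : (1 / (a : ℂ) + I * ε) ≠ 0 := hτ0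
    field_simp
    linear_combination (-1 : ℂ) * I_sq
  have h4 : -I * (a * I * ε / τ) = (ε : ℂ) * (a / τ) := by
    linear_combination (- (a * ε / τ)) * I_sq
  rw [aux_theta_S τ, h2, aux_theta_S (a * I * ε / τ), h3, h4, aux_cpow_mul ε hε _ (div_ne_zero ha' hτ0)]
  have h5 : (ε : ℂ) ^ (1 / 2 : ℂ) ≠ 0 := by simp [cpow_eq_zero_iff, hε']
  field_simp

open Complex Filter Topology in
theorem aux_lim1 (a : ℕ) (ha : 0 < a) (he : Even a) :
    Tendsto (fun ε : ℝ => (ε : ℂ) ^ (1 / 2 : ℂ) * jacobiTheta (1 / a + I * ε)) (𝓝[>] 0)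
      (𝓝 (1 / (-I * (1 / a)) ^ (1 / 2 : ℂ) * (1 / a))) := by
  have ha' : (a : ℂ) ≠ 0 := by exact_mod_cast ha.ne'
  have ha0 : (0 : ℝ) < a := by exact_mod_cast ha
  have e : (fun ε : ℝ => (ε : ℂ) ^ (1 / 2 : ℂ) * jacobiTheta (1 / a + I * ε)) =ᶠ[𝓝[>] 0] _ :=
    eventually_nhdsWithin_of_forall (fun ε hε => aux_theta_eq a ha he ε hε)
  rw [tendsto_congr' e]
  have t0 : Tendsto (fun ε : ℝ => (1 / a + I * ε : ℂ)) (𝓝[>] 0) (𝓝 (1 / a)) := by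
    have : Continuous (fun ε : ℝ => (1 / a + I * ε : ℂ)) := by fun_prop
    have := this.tendsto 0
    simp only [ofReal_zero, mul_zero, add_zero] at this
    exact this.mono_left nhdsWithin_le_nhds
  have t1 : Tendsto (fun ε : ℝ => 1 / (-I * (1 / a + I * ε)) ^ (1 / 2 : ℂ)) (𝓝[>] 0)
      (𝓝 (1 / (-I * (1 / a)) ^ (1 / 2 : ℂ))) := by
    refine Tendsto.div tendsto_const_nhds ?_ ?_
    · refine Tendsto.cpow (t0.const_mul _) tendsto_const_nhds ?_
      right
      simp [ha.ne']
    · simp [cpow_eq_zero_iff, ha']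
  have t2 : Tendsto (fun ε : ℝ => 1 / ((a : ℂ) / (1 / a + I * ε)) ^ (1 / 2 : ℂ)) (𝓝[>] 0)
      (𝓝 (1 / a)) := by
    have h : ((a : ℂ) / (1 / a)) ^ (1 / 2 : ℂ) = a := by
      have : (a : ℂ) / (1 / a) = (((a : ℝ) ^ 2 : ℝ) : ℂ) := by
        push_cast; field_simp
      rw [this, show (1 / 2 : ℂ) = ((1 / 2 : ℝ) : ℂ) by push_cast; rfl, ← ofReal_cpow (by positivity),
        ← Real.sqrt_eq_rpow, Real.sqrt_sq ha0.le]
      simp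
    refine Tendsto.div tendsto_const_nhds ?_ ha'
    have : Tendsto (fun ε : ℝ => ((a : ℂ) / (1 / a + I * ε)) ^ (1 / 2 : ℂ)) (𝓝[>] 0)
        (𝓝 (((a : ℂ) / (1 / a)) ^ (1 / 2 : ℂ))) := by
      refine Tendsto.cpow (Tendsto.div tendsto_const_nhds t0 (by simp [ha'])) tendsto_const_nhds ?_
      left
      have : (a : ℂ) / (1 / a) = (((a : ℝ) ^ 2 : ℝ) : ℂ) := by
        push_cast; field_simp
      rw [this, ofReal_re]; positivity
    rwa [h] at this
  have t3 : Tendsto (fun ε : ℝ => jacobiTheta (-(1 / a) + I * ((1 / ((a : ℝ) ^ 2 * ε) : ℝ) : ℂ)))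
      (𝓝[>] 0) (𝓝 1) := by
    have b1 : Tendsto (fun ε : ℝ => 1 / ((a : ℝ) ^ 2 * ε)) (𝓝[>] 0) atTop := by
      have : (fun ε : ℝ => 1 / ((a : ℝ) ^ 2 * ε)) = fun ε => (1 / (a : ℝ) ^ 2) * ε⁻¹ := by
        funext ε; field_simp
      rw [this]
      exact tendsto_inv_nhdsGT_zero.const_mul_atTop (by positivity)
    have b2 : Tendsto (fun ε : ℝ => (-(1 / a) + I * ((1 / ((a : ℝ) ^ 2 * ε) : ℝ) : ℂ)))
        (𝓝[>] 0) (comap im atTop) := by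
      rw [tendsto_comap_iff]
      refine b1.congr (fun ε => ?_)
      have : ((1 : ℂ) / a).im = 0 := by
        rw [show (1 : ℂ) / a = ((1 / a : ℝ) : ℂ) by push_cast; rfl, ofReal_im]
      simp only [Function.comp, add_im, neg_im, this, mul_im, I_re, I_im, ofReal_re, ofReal_im]
      ring
    have b3 := isBigO_at_im_infty_jacobiTheta_sub_one
    have b4 : Tendsto (fun τ => jacobiTheta τ - 1) (comap im atTop) (𝓝 0) := by
      refine b3.trans_tendsto ?_
      have : Tendsto (fun x : ℝ => Real.exp (-Real.pi * x)) atTop (𝓝 0) := by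
        refine Real.tendsto_exp_atBot.comp ?_
        exact tendsto_id.const_mul_atTop_of_neg (by simpa using Real.pi_pos)
      exact this.comp tendsto_comap
    have b5 := (b4.comp b2).add_const 1
    simpa [Function.comp_def] using b5
  simpa using (t1.mul t2).mul t3

open Complex Filter Topology in
theorem aux_theta_split (a : ℕ) (ha : 0 < a) (he : Even a) (ε : ℝ) (hε : 0 < ε) :
    jacobiTheta (1 / a + I * ε) = ∑ k : Fin a, cexp (Real.pi * I * (k : ℕ) ^ 2 / a) *
      (HurwitzZeta.evenKernel (((k : ℕ) / a : ℝ) : UnitAddCircle) ((a : ℝ) ^ 2 * ε) : ℂ) := by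
  have : NeZero a := ⟨ha.ne'⟩
  have ha' : (a : ℂ) ≠ 0 := by exact_mod_cast ha.ne'
  have ha0 : (a : ℝ) ≠ 0 := by exact_mod_cast ha.ne'
  have him : 0 < (1 / a + I * ε : ℂ).im := by
    have : ((1 : ℂ) / a).im = 0 := by
      rw [show (1 : ℂ) / a = ((1 / a : ℝ) : ℂ) by push_cast; rfl, ofReal_im]
    rw [add_im, this]
    simpa using hε
  have h1 := hasSum_jacobiTheta₂_term 0 him
  rw [← jacobiTheta_eq_jacobiTheta₂, ← (Int.divModEquiv a).symm.hasSum_iff] at h1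
  have h2 := h1.prod_fiberwise (fun m => hasSum_fintype _)
  refine h2.unique (hasSum_sum (fun k _ => ?_))
  have h3 := HurwitzZeta.hasSum_int_evenKernel ((k : ℕ) / a : ℝ) (t := (a : ℝ) ^ 2 * ε) (by positivity)
  have h4 := (Complex.hasSum_ofReal.mpr h3).mul_left (cexp (Real.pi * I * (k : ℕ) ^ 2 / a))
  refine Eq.mp (congrArg (fun f => HasSum f _) (funext fun m => ?_)) h4
  symm
  rw [ofReal_exp, ← Complex.exp_add]
  simp only [Function.comp, jacobiTheta₂_term, Int.divModEquiv_symm_apply]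
  obtain ⟨b, hb⟩ := he
  have hb' : (a : ℂ) = b + b := by exact_mod_cast hb
  rw [Complex.exp_eq_exp_iff_exists_int]
  refine ⟨m * (k : ℕ) + b * m ^ 2, ?_⟩
  push_cast
  field_simp
  rw [hb']
  ring_nf
  try simp only [I_sq]
  try ring_nf

open Complex Filter Topology in
theorem aux_lim2 (a : ℕ) (ha : 0 < a) (he : Even a) :
    Tendsto (fun ε : ℝ => (ε : ℂ) ^ (1 / 2 : ℂ) * jacobiTheta (1 / a + I * ε)) (𝓝[>] 0)
      (𝓝 (∑ k : Fin a, cexp (Real.pi * I * (k : ℕ) ^ 2 / a) * (1 / a))) := by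
  have ha' : (a : ℂ) ≠ 0 := by exact_mod_cast ha.ne'
  have ha0 : (0 : ℝ) < a := by exact_mod_cast ha
  have e : (fun ε : ℝ => (ε : ℂ) ^ (1 / 2 : ℂ) * jacobiTheta (1 / a + I * ε)) =ᶠ[𝓝[>] 0]
      fun ε : ℝ => ∑ k : Fin a, cexp (Real.pi * I * (k : ℕ) ^ 2 / a) * ((1 / a) *
        ((HurwitzZeta.cosKernel (((k : ℕ) / a : ℝ) : UnitAddCircle) (1 / ((a : ℝ) ^ 2 * ε)) : ℝ) : ℂ)) := by
    refine eventually_nhdsWithin_of_forall (fun ε hε => ?_)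
    have hε : 0 < ε := hε
    simp only
    rw [aux_theta_split a ha he ε hε, Finset.mul_sum]
    refine Finset.sum_congr rfl (fun k _ => ?_)
    rw [HurwitzZeta.evenKernel_functional_equation, ← Real.sqrt_eq_rpow,
      Real.sqrt_mul (by positivity), Real.sqrt_sq ha0.le,
      show (1 / 2 : ℂ) = ((1 / 2 : ℝ) : ℂ) by push_cast; rfl, ← ofReal_cpow hε.le,
      ← Real.sqrt_eq_rpow]
    have : ((√ε : ℝ) : ℂ) ≠ 0 := by exact_mod_cast (Real.sqrt_pos.mpr hε).ne'
    push_cast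
    field_simp
  rw [tendsto_congr' e]
  refine tendsto_finsetSum _ (fun k _ => ?_)
  refine Tendsto.const_mul _ ?_
  have b1 : Tendsto (fun ε : ℝ => 1 / ((a : ℝ) ^ 2 * ε)) (𝓝[>] 0) atTop := by
    have : (fun ε : ℝ => 1 / ((a : ℝ) ^ 2 * ε)) = fun ε => (1 / (a : ℝ) ^ 2) * ε⁻¹ := by
      funext ε; field_simp
    rw [this]
    exact tendsto_inv_nhdsGT_zero.const_mul_atTop (by positivity)
  obtain ⟨p, hp, hO⟩ := HurwitzZeta.isBigO_atTop_cosKernel_sub (((k : ℕ) / a : ℝ) : UnitAddCircle)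
  have b4 := hO.trans_tendsto (Real.tendsto_exp_atBot.comp
    (tendsto_id.const_mul_atTop_of_neg (neg_lt_zero.mpr hp)))
  have b5 := (b4.comp b1).add_const 1
  have b6 : Tendsto (fun ε : ℝ => (HurwitzZeta.cosKernel (((k : ℕ) / a : ℝ) : UnitAddCircle)
      (1 / ((a : ℝ) ^ 2 * ε)))) (𝓝[>] 0) (𝓝 1) := by
    simpa [Function.comp_def] using b5
  have b7 := ((continuous_ofReal.tendsto 1).comp b6).const_mul (1 / (a : ℂ))
  simpa [Function.comp_def] using b7

open Complex Filter Topology in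
theorem aux_gauss (a : ℕ) (ha : 0 < a) (he : Even a) :
    ∃ c : ℝ, 0 < c ∧
      ∑ k : Fin a, cexp (Real.pi * I * (k : ℕ) ^ 2 / a) = c * (1 / (-I) ^ (1 / 2 : ℂ)) := by
  have ha' : (a : ℂ) ≠ 0 := by exact_mod_cast ha.ne'
  have ha0 : (0 : ℝ) < a := by exact_mod_cast ha
  have h := tendsto_nhds_unique (aux_lim2 a ha he) (aux_lim1 a ha he)
  rw [← Finset.sum_mul] at h
  have h' := mul_right_cancel₀ (by simp [ha']) h
  refine ⟨1 / (1 / (a : ℝ)) ^ (1 / 2 : ℝ), by positivity, ?_⟩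
  rw [h', show (-I * (1 / a) : ℂ) = ((1 / a : ℝ) : ℂ) * (-I) by push_cast; ring,
    aux_cpow_mul _ (by positivity) _ (by simp)]
  have hc : ((1 / (1 / (a : ℝ)) ^ (1 / 2 : ℝ) : ℝ) : ℂ) = 1 / ((1 / a : ℝ) : ℂ) ^ (1 / 2 : ℂ) := by
    rw [ofReal_div, ofReal_cpow (by positivity)]
    push_cast
    rfl
  rw [hc, one_div_mul_one_div]

/-- The function `x ↦ exp(π i x)` on rationals. -/
noncomputable def eRat (x : ℚ) : ℂ := Complex.exp (Real.pi * Complex.I * x)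

theorem eRat_add (x y : ℚ) : eRat (x + y) = eRat x * eRat y := by
  unfold eRat
  rw [← Complex.exp_add]
  congr 1
  push_cast
  ring

theorem eRat_eq_one_iff (x : ℚ) : eRat x = 1 ↔ ∃ n : ℤ, x = 2 * n := by
  unfold eRat
  rw [Complex.exp_eq_one_iff]
  have hpi : (Real.pi : ℂ) * Complex.I ≠ 0 := by simp [Real.pi_ne_zero]
  refine exists_congr (fun n => ?_)
  rw [show (n : ℂ) * (2 * Real.pi * Complex.I) = Real.pi * Complex.I * (2 * n) by ring,
    mul_right_inj' hpi]
  constructor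
  · intro h; exact_mod_cast h
  · intro h; rw [h]; push_cast; rfl

theorem eRat_zero : eRat 0 = 1 := by simp [eRat]

theorem eRat_ne_zero (x : ℚ) : eRat x ≠ 0 := Complex.exp_ne_zero _

theorem eRat_sum {ι : Type*} (s : Finset ι) (f : ι → ℚ) :
    eRat (∑ i ∈ s, f i) = ∏ i ∈ s, eRat (f i) := by
  classical
  induction s using Finset.induction_on with
  | empty => simp [eRat_zero]
  | insert a s ha ih => rw [Finset.sum_insert ha, Finset.prod_insert ha, eRat_add, ih]

theorem eRat_congr (x y : ℚ) (h : ∃ n : ℤ, x - y = 2 * n) : eRat x = eRat y := by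
  have := (eRat_eq_one_iff _).mpr h
  rw [← sub_add_cancel x y, eRat_add, this, one_mul]

theorem eRat_gauss (a : ℕ) (ha : 0 < a) (he : Even a) [NeZero a] :
    ∃ c : ℝ, 0 < c ∧
      ∑ k : ZMod a, eRat ((k.val : ℚ) ^ 2 / a) = c * (1 / (-Complex.I) ^ (1 / 2 : ℂ)) := by
  obtain ⟨c, hc, h⟩ := aux_gauss a ha he
  refine ⟨c, hc, ?_⟩
  rw [← h]
  cases a with
  | zero => omega
  | succ n =>
    have e : ∀ k : ZMod (n + 1), eRat ((k.val : ℚ) ^ 2 / (n + 1 : ℕ)) =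
        (fun k : Fin (n + 1) => Complex.exp (Real.pi * Complex.I * (k : ℕ) ^ 2 / (n + 1 : ℕ))) k := ?_
    · rw [Finset.sum_congr rfl (fun k _ => e k)]
      rfl
    intro k
    unfold eRat
    congr 1
    push_cast
    rw [mul_div_assoc]
    rfl

/-- The Gauss sum of the discriminant form of an even sublattice, evaluated through a unimodular
overlattice with characteristic vector `w`. -/
theorem aux_sum {V : Type*} [AddCommGroup V] [Module ℚ V]
    {G : Type*} [AddCommGroup G] [Fintype G]
    (B : V →ₗ[ℚ] V →ₗ[ℚ] ℚ) (hB : ∀ x y, B x y = B y x)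
    (N M : Submodule ℤ V) (hU : N = dualLattice B N) (hMN : M ≤ N)
    (hMe : ∀ m ∈ M, ∃ n : ℤ, B m m = 2 * n)
    (w : V) (hw : ∀ x ∈ N, ∃ k : ℤ, B w x = B x x + 2 * k)
    (r : G → V) (r0 : r 0 = 0) (r1 : ∀ g h, r (g + h) - (r g + r h) ∈ M)
    (r2 : ∀ g, r g ∈ dualLattice B M)
    (r3 : ∀ d ∈ dualLattice B M, ∃ g, d - r g ∈ M) :
    ∃ c : ℕ, ∑ g, eRat (B (r g) (r g)) = c * eRat (B w w / 4) := by
  classical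
  have hNN : ∀ x ∈ N, ∀ y ∈ N, ∃ n : ℤ, B x y = n := by
    intro x hx y hy
    rw [hU] at hx
    exact hx y hy
  have hND : N ≤ dualLattice B M := fun x hx y hy => hNN x hx y (hMN hy)
  -- `B w m` is even on `M`
  have hwM : ∀ m ∈ M, ∃ n : ℤ, B w m = 2 * n := by
    intro m hm
    obtain ⟨k, hk⟩ := hw m (hMN hm)
    obtain ⟨n, hn⟩ := hMe m hm
    exact ⟨n + k, by rw [hk, hn]; push_cast; ring⟩
  -- invariance of the quadratic form
  have hq : ∀ d ∈ dualLattice B M, ∀ d', d' - d ∈ M → eRat (B d' d') = eRat (B d d) := by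
    intro d hd d' hm
    obtain ⟨k, hk⟩ := hd _ hm
    obtain ⟨n, hn⟩ := hMe _ hm
    apply eRat_congr
    refine ⟨k + n, ?_⟩
    simp only [map_sub, LinearMap.sub_apply] at hk hn
    rw [hB d' d] at hn
    push_cast
    linarith
  let A : AddSubgroup G :=
    { carrier := {g | r g ∈ N}
      zero_mem' := by simp [r0]
      add_mem' := by
        intro a b ha hb
        have := N.add_mem (hMN (r1 a b)) (N.add_mem ha hb)
        simpa using this
      neg_mem' := by
        intro a ha
        have h1 := hMN (r1 a (-a))
        rw [add_neg_cancel, r0] at h1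
        have := N.neg_mem (N.add_mem h1 ha)
        have e : -(0 - (r a + r (-a)) + r a) = r (-a) := by abel
        rwa [e] at this }
  have memA : ∀ g, g ∈ A ↔ r g ∈ N := fun g => Iff.rfl
  have hψM : ∀ g, ∀ m ∈ M, eRat (B ((2 : ℚ) • r g + w) m) = 1 := by
    intro g m hm
    rw [eRat_eq_one_iff]
    obtain ⟨k, hk⟩ := r2 g m hm
    obtain ⟨n, hn⟩ := hwM m hm
    refine ⟨k + n, ?_⟩
    simp only [map_add, map_smul, LinearMap.add_apply, LinearMap.smul_apply, smul_eq_mul, hk, hn]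
    push_cast; ring
  let ψ : G → AddChar A ℂ := fun g =>
    { toFun := fun x => eRat (B ((2 : ℚ) • r g + w) (r x))
      map_zero_eq_one' := by simp [r0, eRat_zero]
      map_add_eq_mul' := by
        intro x y
        have e : r ((x + y : A) : G) = (r (x + y : G) - (r x + r y)) + (r x + r y) := by
          simp
        rw [e, map_add, eRat_add, hψM g _ (r1 _ _), one_mul, map_add, eRat_add] }
  have hψ : ∀ g (x : A), ψ g x = eRat (B ((2 : ℚ) • r g + w) (r x)) := fun g x => rfl
  have hshift : ∀ g (x : A), eRat (B (r (g + x)) (r (g + x))) =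
      eRat (B (r g) (r g)) * ψ g x := by
    intro g x
    have hx : r x ∈ N := x.2
    rw [hq (r g + r x) (add_mem (r2 g) (hND hx)) _ (r1 g x), hψ, ← eRat_add]
    apply eRat_congr
    obtain ⟨k, hk⟩ := hw _ hx
    refine ⟨-k, ?_⟩
    simp only [map_add, map_smul, LinearMap.add_apply, LinearMap.smul_apply, smul_eq_mul, hk,
      hB (r x) (r g)]
    push_cast; ring
  have hone : ∀ g, ψ g = 0 → eRat (B (r g) (r g)) = eRat (B w w / 4) := by
    intro g hg
    have hn : r g + (1 / 2 : ℚ) • w ∈ N := by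
      rw [hU]
      intro y hy
      obtain ⟨x, hx⟩ := r3 y (hND hy)
      have hxA : x ∈ A := by
        rw [memA]
        have := N.sub_mem hy (hMN hx)
        simpa using this
      have h1 : eRat (B ((2 : ℚ) • r g + w) y) = 1 := by
        have h2 : ψ g ⟨x, hxA⟩ = 1 := by rw [hg]; rfl
        rw [hψ] at h2
        have e : y = (y - r x) + r x := by simp
        rw [e, map_add, eRat_add, hψM g _ hx, one_mul]
        exact h2
      obtain ⟨n, hn⟩ := (eRat_eq_one_iff _).mp h1
      refine ⟨n, ?_⟩
      simp only [map_add, map_smul, LinearMap.add_apply, LinearMap.smul_apply, smul_eq_mul] at hn ⊢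
      linarith
    set n := r g + (1 / 2 : ℚ) • w with hndef
    have e : r g = n - (1 / 2 : ℚ) • w := by rw [hndef]; simp
    obtain ⟨k, hk⟩ := hw n hn
    apply eRat_congr
    refine ⟨-k, ?_⟩
    rw [e]
    simp only [map_sub, map_smul, LinearMap.sub_apply, LinearMap.smul_apply, smul_eq_mul, hB n w, hk]
    push_cast
    ring
  have key : (Fintype.card A : ℂ) * ∑ g, eRat (B (r g) (r g)) =
      ∑ g, eRat (B (r g) (r g)) * ∑ x : A, ψ g x := by
    simp_rw [Finset.mul_sum, ← hshift]
    rw [Finset.sum_comm]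
    have : ∀ x : A, ∑ g, eRat (B (r (g + x)) (r (g + x))) = ∑ g, eRat (B (r g) (r g)) := by
      intro x
      exact Fintype.sum_equiv (Equiv.addRight (x : G)) _ _ (fun g => rfl)
    simp_rw [this]
    rw [← Finset.mul_sum]
    simp
  refine ⟨(Finset.univ.filter (fun g => ψ g = 0)).card, ?_⟩
  have hA0 : (Fintype.card A : ℂ) ≠ 0 := by simp
  apply mul_left_cancel₀ hA0
  rw [key]
  simp_rw [AddChar.sum_eq_ite, mul_ite, mul_zero]
  rw [← Finset.sum_filter]
  rw [Finset.sum_congr rfl (g := fun _ => eRat (B w w / 4) * (Fintype.card A : ℂ))]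
  · rw [Finset.sum_const, nsmul_eq_mul]; ring
  · intro g hg
    rw [hone g (by simpa using hg)]

theorem aux_mul_mem {V : Type*} [AddCommGroup V] [Module ℚ V] (N : Submodule ℤ V) (x : V)
    (hx : x ∈ Submodule.span ℚ (N : Set V)) : ∃ n : ℕ, 0 < n ∧ (n : ℤ) • x ∈ N := by
  induction hx using Submodule.span_induction with
  | mem x h => exact ⟨1, one_pos, by simpa using h⟩
  | zero => exact ⟨1, one_pos, by simp⟩
  | add x y _ _ hx hy =>
    obtain ⟨n, hn, h1⟩ := hx
    obtain ⟨m, hm, h2⟩ := hy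
    refine ⟨n * m, Nat.mul_pos hn hm, ?_⟩
    have := N.add_mem (N.smul_mem (m : ℤ) h1) (N.smul_mem (n : ℤ) h2)
    rw [smul_smul, smul_smul, mul_comm (m : ℤ)] at this
    rw [smul_add]
    push_cast
    exact this
  | smul c x _ hx =>
    obtain ⟨n, hn, h1⟩ := hx
    refine ⟨n * c.den, Nat.mul_pos hn c.den_pos, ?_⟩
    have := N.smul_mem c.num h1
    have e : ((n * c.den : ℕ) : ℤ) • c • x = c.num • (n : ℤ) • x := by
      simp only [← Int.cast_smul_eq_zsmul ℚ, smul_smul]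
      congr 1
      push_cast
      have := Rat.mul_den_eq_num c
      rw [mul_assoc, mul_comm _ c, this, mul_comm]
    rw [e]
    exact this

/-- An orthogonal sublattice with even norms. -/
theorem aux_ortho {V : Type*} [AddCommGroup V] [Module ℚ V] [FiniteDimensional ℚ V]
    (B : V →ₗ[ℚ] V →ₗ[ℚ] ℚ) (hB : IsPosDefSymm B)
    (N : Submodule ℤ V) (hN : IsIntegralLattice B N) :
    ∃ (e : Module.Basis (Fin (Module.finrank ℚ V)) ℚ V) (a : Fin (Module.finrank ℚ V) → ℕ),
      (∀ i, e i ∈ N) ∧ (∀ i, 0 < a i) ∧ (∀ i, Even (a i)) ∧ (∀ i, B (e i) (e i) = a i) ∧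
      ∀ i j, i ≠ j → B (e i) (e j) = 0 := by
  have hs : LinearMap.IsSymm B := ⟨fun x y => hB.1 x y⟩
  obtain ⟨v, hv⟩ := LinearMap.BilinForm.exists_orthogonal_basis (B := B) hs
  have h1 : ∀ i, ∃ n : ℕ, 0 < n ∧ (n : ℤ) • v i ∈ N := fun i =>
    aux_mul_mem N (v i) (by rw [hN.spans]; trivial)
  choose n hn hmem using h1
  have hne : ∀ i, ((2 * n i : ℕ) : ℚ) ≠ 0 := fun i => by have := hn i; positivity
  have hmem2 : ∀ i, ((2 * n i : ℕ) : ℚ) • v i = (2 : ℤ) • ((n i : ℤ) • v i) := by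
    intro i
    simp only [← Int.cast_smul_eq_zsmul ℚ, smul_smul]
    push_cast
    rfl
  have h2 : ∀ i, ∃ a : ℕ, 0 < a ∧ Even a ∧
      B (((2 * n i : ℕ) : ℚ) • v i) (((2 * n i : ℕ) : ℚ) • v i) = a := by
    intro i
    obtain ⟨k, hk⟩ := hN.integral (hmem i) _ (hmem i)
    have hpos : 0 < B ((n i : ℤ) • v i) ((n i : ℤ) • v i) := by
      apply hB.2
      rw [← Int.cast_smul_eq_zsmul ℚ]
      exact smul_ne_zero (by have := hn i; simp; omega) (v.ne_zero i)
    have hk0 : 0 < k := by rw [hk] at hpos; exact_mod_cast hpos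
    refine ⟨4 * k.toNat, by omega, ⟨2 * k.toNat, by ring⟩, ?_⟩
    have hkk : ((k.toNat : ℕ) : ℚ) = k := by
      have : ((k.toNat : ℕ) : ℤ) = k := Int.toNat_of_nonneg hk0.le
      exact_mod_cast this
    rw [hmem2]
    generalize (n i : ℤ) • v i = x at hk
    rw [← Int.cast_smul_eq_zsmul ℚ 2, map_smul, map_smul, LinearMap.smul_apply, hk]
    push_cast
    rw [hkk]
    simp only [smul_eq_mul]
    ring
  choose a ha he hBa using h2
  refine ⟨v.isUnitSMul (w := fun i => ((2 * n i : ℕ) : ℚ)) (fun i => (hne i).isUnit), a, ?_, ha, he, ?_, ?_⟩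
  · intro i
    rw [Module.Basis.isUnitSMul_apply, hmem2]
    exact N.smul_mem _ (hmem i)
  · intro i
    rw [Module.Basis.isUnitSMul_apply, hBa]
  · intro i j hij
    rw [Module.Basis.isUnitSMul_apply, Module.Basis.isUnitSMul_apply]
    have : B (v i) (v j) = 0 := hv hij
    simp [this]

/-- Van der Blij's lemma in rank 24: a characteristic vector has norm divisible by 8. -/
theorem aux_blij {V : Type*} [AddCommGroup V] [Module ℚ V]
    (B : V →ₗ[ℚ] V →ₗ[ℚ] ℚ) (hB : IsPosDefSymm B)
    (N : Submodule ℤ V) (hN : IsIntegralLattice B N) (hU : IsUnimodular B N)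
    (hr : Module.finrank ℚ V = 24)
    (w : V) (hw : ∀ x ∈ N, ∃ k : ℤ, B w x = B x x + 2 * k) :
    ∃ m : ℤ, B w w = 8 * m := by
  classical
  have : FiniteDimensional ℚ V := Module.finite_of_finrank_pos (by omega)
  obtain ⟨e, a, heN, ha, hev, haa, hort⟩ := aux_ortho B hB N hN
  have hne : ∀ i, NeZero (a i) := fun i => ⟨(ha i).ne'⟩
  have ha0 : ∀ i, (a i : ℚ) ≠ 0 := fun i => by have := ha i; positivity
  set M : Submodule ℤ V := Submodule.span ℤ (Set.range e) with hM
  have hMN : M ≤ N := Submodule.span_le.mpr (by rintro _ ⟨i, rfl⟩; exact heN i)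
  have hBsum : ∀ (c : Fin (Module.finrank ℚ V) → ℚ) i, B (∑ j, c j • e j) (e i) = c i * a i := by
    intro c i
    rw [map_sum, LinearMap.sum_apply, Finset.sum_eq_single i]
    · simp [haa]
    · intro j _ hji
      simp [hort j i hji]
    · simp
  have hBsum2 : ∀ (c d : Fin (Module.finrank ℚ V) → ℚ),
      B (∑ j, c j • e j) (∑ j, d j • e j) = ∑ i, c i * d i * a i := by
    intro c d
    rw [map_sum]
    refine Finset.sum_congr rfl (fun i _ => ?_)
    rw [map_smul, hBsum, smul_eq_mul]
    ring
  have memM : ∀ m, m ∈ M ↔ ∃ t : Fin (Module.finrank ℚ V) → ℤ, m = ∑ i, (t i : ℚ) • e i := by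
    intro m
    rw [hM, Submodule.mem_span_range_iff_exists_fun]
    simp only [Int.cast_smul_eq_zsmul, eq_comm]
  let r : (∀ i, ZMod (a i)) → V := fun g => ∑ i, (((g i).val : ℚ) / a i) • e i
  have hmod : ∀ i (k l : ℤ), ((k : ZMod (a i)) = (l : ZMod (a i))) →
      ∃ t : ℤ, (k : ℚ) / a i - (l : ℚ) / a i = t := by
    intro i k l h
    rw [ZMod.intCast_eq_intCast_iff_dvd_sub] at h
    obtain ⟨t, ht⟩ := h
    refine ⟨-t, ?_⟩
    have ht' : (l : ℚ) - k = a i * t := by exact_mod_cast ht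
    have := ha0 i
    field_simp
    push_cast
    linarith
  have key : ∃ c : ℕ, ∑ g, eRat (B (r g) (r g)) = c * eRat (B w w / 4) := by
    refine aux_sum B hB.1 N M hU hMN ?_ w hw r ?_ ?_ ?_ ?_
    · intro m hm
      obtain ⟨t, rfl⟩ := (memM m).mp hm
      choose b hb using hev
      refine ⟨∑ i, t i * t i * b i, ?_⟩
      rw [hBsum2]
      push_cast
      rw [Finset.mul_sum]
      refine Finset.sum_congr rfl (fun i _ => ?_)
      have : (a i : ℚ) = b i + b i := by exact_mod_cast hb i
      rw [this]; ring
    · simp [r]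
    · intro g h
      have : ∀ i, ∃ t : ℤ, (((g + h) i).val : ℚ) / a i - ((g i).val / a i + (h i).val / a i) = t := by
        intro i
        obtain ⟨t, ht⟩ := hmod i ((g + h) i).val ((g i).val + (h i).val) (by simp)
        refine ⟨t, ?_⟩
        rw [← ht]
        push_cast
        ring
      choose t ht using this
      rw [memM]
      refine ⟨t, ?_⟩
      simp only [r]
      rw [← Finset.sum_add_distrib, ← Finset.sum_sub_distrib]
      refine Finset.sum_congr rfl (fun i _ => ?_)
      rw [← ht, sub_smul, add_smul]
    · intro g y hy
      obtain ⟨t, rfl⟩ := (memM y).mp hy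
      refine ⟨∑ i, (g i).val * t i, ?_⟩
      simp only [r]
      rw [hBsum2]
      push_cast
      refine Finset.sum_congr rfl (fun i _ => ?_)
      have := ha0 i
      field_simp
    · intro d hd
      have hk : ∀ i, ∃ k : ℤ, B d (e i) = k := fun i =>
        hd (e i) (Submodule.subset_span ⟨i, rfl⟩)
      choose k hk using hk
      have hrep : d = ∑ i, ((k i : ℚ) / a i) • e i := by
        have h1 := (e.sum_repr d).symm
        rw [h1]
        refine Finset.sum_congr rfl (fun i _ => ?_)
        congr 1
        rw [← hk, h1, hBsum]
        have := ha0 i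
        field_simp
        simp
      refine ⟨fun i => (k i : ZMod (a i)), ?_⟩
      have : ∀ i, ∃ t : ℤ, (k i : ℚ) / a i - ((k i : ZMod (a i)).val : ℚ) / a i = t := by
        intro i
        obtain ⟨t, ht⟩ := hmod i (k i) ((k i : ZMod (a i)).val) (by simp)
        exact ⟨t, by rw [← ht]; push_cast; rfl⟩
      choose t ht using this
      rw [memM]
      refine ⟨t, ?_⟩
      simp only [r]
      rw [hrep, ← Finset.sum_sub_distrib]
      refine Finset.sum_congr rfl (fun i _ => ?_)
      rw [← ht, sub_smul]
  obtain ⟨c, hc⟩ := key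
  have hprod : ∑ g, eRat (B (r g) (r g)) =
      ∏ i, ∑ k : ZMod (a i), eRat ((k.val : ℚ) ^ 2 / a i) := by
    rw [Finset.prod_univ_sum, Fintype.piFinset_univ]
    refine Finset.sum_congr rfl (fun g _ => ?_)
    rw [← eRat_sum, hBsum2]
    congr 1
    refine Finset.sum_congr rfl (fun i _ => ?_)
    have := ha0 i
    field_simp
  choose C hC hCs using fun i => eRat_gauss (a i) (ha i) (hev i)
  have hz : ((1 : ℂ) / (-Complex.I) ^ (1 / 2 : ℂ)) ^ 24 = 1 := by
    have : ((-Complex.I) ^ (1 / 2 : ℂ)) ^ 2 = -Complex.I := by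
      rw [← Complex.cpow_nat_mul]
      norm_num
    rw [div_pow, show (24 : ℕ) = 2 * 12 by rfl, pow_mul, pow_mul ((-Complex.I) ^ (1 / 2 : ℂ)), this,
      show (12 : ℕ) = 4 * 3 by rfl, pow_mul (-Complex.I), neg_pow, Complex.I_pow_four]
    norm_num
  have hz' : ((1 : ℂ) / (-Complex.I) ^ (1 / 2 : ℂ)) ^ (Module.finrank ℚ V) = 1 := by
    rw [hr]; exact hz
  have hprod2 : ∑ g, eRat (B (r g) (r g)) = ((∏ i, C i : ℝ) : ℂ) := by
    rw [hprod]
    simp_rw [hCs]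
    rw [Finset.prod_mul_distrib, Finset.prod_const, Finset.card_univ, Fintype.card_fin, hz']
    push_cast
    ring
  rw [hprod2] at hc
  have hCpos : 0 < ∏ i, C i := Finset.prod_pos (fun i _ => hC i)
  have hnorm : ‖eRat (B w w / 4)‖ = 1 := by
    unfold eRat
    rw [show (Real.pi * Complex.I * ((B w w / 4 : ℚ) : ℂ) : ℂ)
      = ((Real.pi * ((B w w / 4 : ℚ) : ℝ) : ℝ) : ℂ) * Complex.I by push_cast; ring]
    exact Complex.norm_exp_ofReal_mul_I _
  have hcn := congrArg (fun z => ‖z‖) hc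
  simp only [norm_mul, hnorm, Complex.norm_real, Complex.norm_natCast, mul_one] at hcn
  rw [Real.norm_of_nonneg hCpos.le] at hcn
  rw [hcn] at hc hCpos
  have hone : eRat (B w w / 4) = 1 := by
    have hc0 : ((c : ℝ) : ℂ) ≠ 0 := by exact_mod_cast hCpos.ne'
    apply mul_left_cancel₀ hc0
    rw [mul_one]
    simpa using hc.symm
  obtain ⟨m, hm⟩ := (eRat_eq_one_iff _).mp hone
  exact ⟨m, by linarith⟩

/-- A unimodular lattice has a characteristic vector. -/
theorem aux_char {V : Type*} [AddCommGroup V] [Module ℚ V] [FiniteDimensional ℚ V]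
    (B : V →ₗ[ℚ] V →ₗ[ℚ] ℚ) (hB : IsPosDefSymm B)
    (N : Submodule ℤ V) (hN : IsIntegralLattice B N) (hU : IsUnimodular B N) :
    ∃ w ∈ N, ∀ x ∈ N, ∃ k : ℤ, B w x = B x x + 2 * k := by
  have hlat : Submodule.IsLattice ℚ N := ⟨hN.fg, hN.spans⟩
  have hfin : Module.Finite ℤ N := Module.Finite.iff_fg.mpr hN.fg
  have hfree : Module.Free ℤ N := Submodule.IsLattice.free ℚ N
  let b := Module.Free.chooseBasis ℤ N
  let bQ := b.extendOfIsLattice ℚ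
  have hinj : Function.Injective B := by
    rw [injective_iff_map_eq_zero]
    intro x hx
    by_contra hne
    have := hB.2 x hne
    rw [hx] at this
    simp at this
  have hsurj : Function.Surjective B :=
    (LinearMap.injective_iff_surjective_of_finrank_eq_finrank
      (Subspace.dual_finrank_eq (K := ℚ) (V := V)).symm).mp hinj
  obtain ⟨w, hw⟩ := hsurj (bQ.constr ℚ (fun i => B (b i : V) (b i : V)))
  have hwb : ∀ i, B w (b i : V) = B (b i : V) (b i : V) := by
    intro i
    have h : bQ i = (b i : V) := b.extendOfIsLattice_apply ℚ i
    rw [hw, ← h, Module.Basis.constr_basis, h]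
  have hchar : ∀ x : N, ∃ k : ℤ, B w x = B (x : V) (x : V) + 2 * k := by
    intro x
    have hx : x ∈ Submodule.span ℤ (Set.range b) := by rw [b.span_eq]; trivial
    induction hx using Submodule.span_induction with
    | mem x h =>
      obtain ⟨i, rfl⟩ := h
      exact ⟨0, by rw [hwb]; simp⟩
    | zero => exact ⟨0, by simp⟩
    | add x y _ _ hx hy =>
      obtain ⟨k, hk⟩ := hx
      obtain ⟨l, hl⟩ := hy
      obtain ⟨n, hn⟩ := hN.integral x.2 _ y.2
      refine ⟨k + l - n, ?_⟩
      have hn' := hn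
      rw [hB.1] at hn'
      simp only [Submodule.coe_add, map_add, LinearMap.add_apply, hk, hl, hn, hn']
      push_cast
      ring
    | smul c x _ hx =>
      obtain ⟨k, hk⟩ := hx
      obtain ⟨n, hn⟩ := hN.integral x.2 _ x.2
      obtain ⟨d, hd⟩ := Int.even_mul_pred_self c
      refine ⟨c * k - d * n, ?_⟩
      have hd' : (c : ℚ) * (c - 1) = d + d := by exact_mod_cast hd
      have e : ((c • x : N) : V) = (c : ℚ) • (x : V) := by
        rw [Int.cast_smul_eq_zsmul]; rfl
      rw [e]
      simp only [map_smul, LinearMap.smul_apply, smul_eq_mul, hk, hn]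
      push_cast
      linear_combination (-(n : ℚ)) * hd'
  refine ⟨w, ?_, fun x hx => hchar ⟨x, hx⟩⟩
  rw [hU]
  intro y hy
  obtain ⟨k, hk⟩ := hchar ⟨y, hy⟩
  obtain ⟨n, hn⟩ := hN.integral hy _ hy
  exact ⟨n + 2 * k, by rw [hk, hn]; push_cast; ring⟩

/-- The even sublattice, in terms of a characteristic vector. -/
def evenSub {V : Type*} [AddCommGroup V] [Module ℚ V] (B : V →ₗ[ℚ] V →ₗ[ℚ] ℚ)
    (N : Submodule ℤ V) (w : V) : Submodule ℤ V where
  carrier := {x | x ∈ N ∧ ∃ n : ℤ, B w x = 2 * n}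
  zero_mem' := ⟨N.zero_mem, 0, by simp⟩
  add_mem' := by
    rintro x y ⟨hx, n, hn⟩ ⟨hy, m, hm⟩
    exact ⟨N.add_mem hx hy, n + m, by rw [map_add, hn, hm]; push_cast; ring⟩
  smul_mem' := by
    rintro c x ⟨hx, n, hn⟩
    refine ⟨N.smul_mem c hx, c * n, ?_⟩
    rw [map_zsmul, hn, zsmul_eq_mul]
    push_cast
    ring

/-- The even neighbor attached to a characteristic vector. -/
def evenNb {V : Type*} [AddCommGroup V] [Module ℚ V] (B : V →ₗ[ℚ] V →ₗ[ℚ] ℚ)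
    (N : Submodule ℤ V) (w : V) : Submodule ℤ V :=
  evenSub B N w ⊔ Submodule.span ℤ {(1 / 2 : ℚ) • w}

theorem evenSub_eq {V : Type*} [AddCommGroup V] [Module ℚ V] (B : V →ₗ[ℚ] V →ₗ[ℚ] ℚ)
    (N : Submodule ℤ V) (w : V) (hw : ∀ x ∈ N, ∃ k : ℤ, B w x = B x x + 2 * k) :
    (evenSub B N w : Set V) = evenSet B N := by
  ext x
  constructor
  · rintro ⟨hx, n, hn⟩
    obtain ⟨k, hk⟩ := hw x hx
    exact ⟨hx, n - k, by push_cast; linarith⟩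
  · rintro ⟨hx, n, hn⟩
    obtain ⟨k, hk⟩ := hw x hx
    exact ⟨hx, n + k, by push_cast; linarith⟩

theorem mem_evenNb {V : Type*} [AddCommGroup V] [Module ℚ V] (B : V →ₗ[ℚ] V →ₗ[ℚ] ℚ)
    (N : Submodule ℤ V) (w : V) (hwN : w ∈ N) (hww : ∃ m : ℤ, B w w = 8 * m) (x : V) :
    x ∈ evenNb B N w ↔ x ∈ evenSub B N w ∨ x - (1 / 2 : ℚ) • w ∈ evenSub B N w := by
  have hw0 : w ∈ evenSub B N w := by
    obtain ⟨m, hm⟩ := hww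
    exact ⟨hwN, 4 * m, by rw [hm]; push_cast; ring⟩
  have h2 : (2 : ℤ) • ((1 / 2 : ℚ) • w) = w := by
    rw [← Int.cast_smul_eq_zsmul ℚ, smul_smul]
    norm_num
  unfold evenNb
  constructor
  · intro hx
    obtain ⟨y, hy, z, hz, rfl⟩ := Submodule.mem_sup.mp hx
    obtain ⟨k, rfl⟩ := Submodule.mem_span_singleton.mp hz
    obtain ⟨d, hd | hd⟩ := Int.even_or_odd' k
    · left
      rw [hd, mul_comm, mul_smul, h2]
      exact add_mem hy (Submodule.smul_mem _ _ hw0)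
    · right
      rw [hd, add_smul, mul_comm, mul_smul, h2, one_smul, ← add_assoc, add_sub_cancel_right]
      exact add_mem hy (Submodule.smul_mem _ _ hw0)
  · rintro (hx | hx)
    · exact Submodule.mem_sup_left hx
    · have := Submodule.add_mem_sup hx (Submodule.mem_span_singleton_self (R := ℤ) ((1 / 2 : ℚ) • w))
      simpa using this

/-- The dual of the even sublattice. -/
theorem aux_dual {V : Type*} [AddCommGroup V] [Module ℚ V] (B : V →ₗ[ℚ] V →ₗ[ℚ] ℚ)
    (hB : ∀ x y, B x y = B y x) (N : Submodule ℤ V) (hN : IsIntegralLattice B N)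
    (hU : IsUnimodular B N) (hodd : IsOddLat B N) (w : V) (hwN : w ∈ N)
    (hw : ∀ x ∈ N, ∃ k : ℤ, B w x = B x x + 2 * k) (y : V)
    (hy : ∀ x ∈ evenSub B N w, ∃ n : ℤ, B y x = n) :
    y ∈ N ∨ y - (1 / 2 : ℚ) • w ∈ N := by
  obtain ⟨v, hv, n, hn⟩ := hodd
  obtain ⟨l, hl⟩ := hw v hv
  -- every element of `N` is in `N₀` or `v + N₀`
  have hsplit : ∀ x ∈ N, x ∈ evenSub B N w ∨ x - v ∈ evenSub B N w := by
    intro x hx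
    obtain ⟨k, hk⟩ := hN.integral hwN _ hx
    obtain ⟨d, hd | hd⟩ := Int.even_or_odd' k
    · left; exact ⟨hx, d, by rw [hk, hd]; push_cast; ring⟩
    · right
      refine ⟨N.sub_mem hx hv, d - n - l, ?_⟩
      rw [map_sub, hk, hl, hn, hd]; push_cast; ring
  have h2v : (2 : ℤ) • v ∈ evenSub B N w := by
    obtain ⟨k, hk⟩ := hN.integral hwN _ hv
    exact ⟨N.smul_mem _ hv, k, by rw [map_zsmul, hk, zsmul_eq_mul]; push_cast; ring⟩
  obtain ⟨k, hk⟩ := hy _ h2v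
  rw [map_zsmul, zsmul_eq_mul] at hk
  push_cast at hk
  obtain ⟨d, hd | hd⟩ := Int.even_or_odd' k
  · left
    have hyv : B y v = d := by rw [hd] at hk; push_cast at hk; linarith
    rw [hU]
    intro x hx
    rcases hsplit x hx with h | h
    · exact hy x h
    · obtain ⟨c, hc⟩ := hy _ h
      rw [map_sub] at hc
      exact ⟨c + d, by push_cast; linarith⟩
  · right
    have hyv : B y v = d + 1 / 2 := by rw [hd] at hk; push_cast at hk; linarith
    have hz : ∀ x ∈ evenSub B N w, ∃ c : ℤ, B (y - (1 / 2 : ℚ) • w) x = c := by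
      intro x hx
      obtain ⟨c, hc⟩ := hy x hx
      obtain ⟨_, m, hm⟩ := hx
      refine ⟨c - m, ?_⟩
      simp only [map_sub, map_smul, LinearMap.sub_apply, LinearMap.smul_apply, smul_eq_mul, hc, hm]
      push_cast; ring
    rw [hU]
    intro x hx
    rcases hsplit x hx with h | h
    · exact hz x h
    · obtain ⟨c, hc⟩ := hz _ h
      refine ⟨c + d - n - l, ?_⟩
      simp only [map_sub, map_smul, LinearMap.sub_apply, LinearMap.smul_apply, smul_eq_mul, hyv, hl, hn]
        at hc ⊢
      push_cast
      linarith

theorem evenNb_isEvenNeighbor {V : Type*} [AddCommGroup V] [Module ℚ V]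
    (B : V →ₗ[ℚ] V →ₗ[ℚ] ℚ)
    (hB : ∀ x y, B x y = B y x) (N : Submodule ℤ V) (hN : IsIntegralLattice B N)
    (hU : IsUnimodular B N) (hodd : IsOddLat B N) (w : V) (hwN : w ∈ N)
    (hw : ∀ x ∈ N, ∃ k : ℤ, B w x = B x x + 2 * k) (hww : ∃ m : ℤ, B w w = 8 * m) :
    IsEvenNeighbor B N (evenNb B N w) := by
  have hmem := mem_evenNb B N w hwN hww
  have hdual := aux_dual B hB N hN hU hodd w hwN hw
  obtain ⟨m, hm⟩ := hww
  have h0N : evenSub B N w ≤ N := fun x hx => hx.1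
  have h0E : evenSub B N w ≤ evenNb B N w := le_sup_left
  have hhE : (1 / 2 : ℚ) • w ∈ evenNb B N w :=
    Submodule.mem_sup_right (Submodule.mem_span_singleton_self _)
  obtain ⟨v, hv, n, hn⟩ := id hodd
  have hv0 : v ∉ evenSub B N w := by
    rintro ⟨_, k, hk⟩
    obtain ⟨l, hl⟩ := hw v hv
    have : (2 * k : ℚ) = 2 * n + 1 + 2 * l := by rw [← hk, hl, hn]
    have : 2 * k = 2 * n + 1 + 2 * l := by exact_mod_cast this
    omega
  have hhN : (1 / 2 : ℚ) • w ∉ N := by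
    intro h
    obtain ⟨k, hk⟩ := hN.integral h _ hv
    rw [map_smul, LinearMap.smul_apply, smul_eq_mul] at hk
    exact hv0 ⟨hv, k, by linarith⟩
  have heven : IsEvenLat B (evenNb B N w) := by
    intro x hx
    rcases (hmem x).mp hx with ⟨h, k, hk⟩ | ⟨h, k, hk⟩
    · obtain ⟨l, hl⟩ := hw x h
      exact ⟨k - l, by push_cast; linarith⟩
    · obtain ⟨l, hl⟩ := hw _ h
      refine ⟨2 * k - l + m, ?_⟩
      simp only [map_sub, map_smul, LinearMap.sub_apply, LinearMap.smul_apply, smul_eq_mul, hm,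
        hB x w] at hk hl
      push_cast
      linarith
  have hint : evenNb B N w ≤ dualLattice B (evenNb B N w) := by
    have c00 : ∀ x ∈ evenSub B N w, ∀ y ∈ evenSub B N w, ∃ n : ℤ, B x y = n :=
      fun x hx y hy => hN.integral hx.1 _ hy.1
    have ch0 : ∀ y ∈ evenSub B N w, ∃ n : ℤ, B ((1 / 2 : ℚ) • w) y = n := by
      rintro y ⟨_, k, hk⟩
      exact ⟨k, by rw [map_smul, LinearMap.smul_apply, smul_eq_mul, hk]; ring⟩
    have chh : B ((1 / 2 : ℚ) • w) ((1 / 2 : ℚ) • w) = 2 * m := by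
      simp only [map_smul, LinearMap.smul_apply, smul_eq_mul, hm]; ring
    generalize (1 / 2 : ℚ) • w = h at *
    intro x hx y hy
    rcases (hmem x).mp hx with hx | hx <;> rcases (hmem y).mp hy with hy | hy
    · exact c00 x hx y hy
    · obtain ⟨c, hc⟩ := c00 x hx _ hy
      obtain ⟨d, hd⟩ := ch0 x hx
      refine ⟨c + d, ?_⟩
      rw [map_sub, hB x h, hd] at hc
      push_cast; linarith
    · obtain ⟨c, hc⟩ := c00 _ hx y hy
      obtain ⟨d, hd⟩ := ch0 y hy
      refine ⟨c + d, ?_⟩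
      rw [map_sub, LinearMap.sub_apply, hd] at hc
      push_cast; linarith
    · obtain ⟨c, hc⟩ := c00 _ hx _ hy
      obtain ⟨d, hd⟩ := ch0 _ hx
      obtain ⟨e, he⟩ := ch0 _ hy
      refine ⟨c + d + e + 2 * m, ?_⟩
      simp only [map_sub, LinearMap.sub_apply, chh] at hc hd he
      rw [hB x h] at hc
      push_cast; linarith
  have hinf : N ⊓ evenNb B N w = evenSub B N w := by
    apply le_antisymm
    · rintro x ⟨hx, hxE⟩
      rcases (hmem x).mp hxE with h | h
      · exact h
      · exfalso
        apply hhN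
        have := N.sub_mem hx (h0N h)
        simpa using this
    · exact le_inf h0N h0E
  refine ⟨⟨?_, ?_, hint⟩, ?_, heven, ?_, ?_⟩
  · have hfin : Module.Finite ℤ N := Module.Finite.iff_fg.mpr hN.fg
    have hnoeth : IsNoetherian ℤ N := inferInstance
    have h1 : (evenSub B N w).FG := (isNoetherian_submodule.mp hnoeth) _ h0N
    exact h1.sup (Submodule.fg_span_singleton _)
  · rw [eq_top_iff, ← hN.spans, Submodule.span_le]
    intro x hx
    obtain ⟨k, hk⟩ := hN.integral hwN _ hx
    have h2 : (2 : ℤ) • x ∈ evenNb B N w :=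
      h0E ⟨N.smul_mem _ hx, k, by rw [map_zsmul, hk, zsmul_eq_mul]; push_cast; ring⟩
    have h3 := Submodule.smul_mem _ (1 / 2 : ℚ) (Submodule.subset_span (R := ℚ) h2)
    rw [← Int.cast_smul_eq_zsmul ℚ, smul_smul] at h3
    norm_num at h3
    exact h3
  · refine le_antisymm hint ?_
    intro y hy
    obtain ⟨c, hc⟩ := hy _ hhE
    rw [hmem]
    rcases hdual y (fun x hx => hy x (h0E hx)) with h | h
    · left
      rw [hB, map_smul, LinearMap.smul_apply, smul_eq_mul] at hc
      exact ⟨h, c, by linarith⟩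
    · right
      refine ⟨h, c - 2 * m, ?_⟩
      rw [hB, map_smul, LinearMap.smul_apply, smul_eq_mul] at hc
      simp only [map_sub, map_smul, smul_eq_mul, hm]
      push_cast
      linarith
  · rw [hinf]
    refine ⟨h0N, v, hv, hv0, ?_⟩
    intro x hx
    obtain ⟨k, hk⟩ := hN.integral hwN _ hx
    obtain ⟨l, hl⟩ := hw v hv
    obtain ⟨d, hd | hd⟩ := Int.even_or_odd' k
    · left; exact ⟨hx, d, by rw [hk, hd]; push_cast; ring⟩
    · right
      refine ⟨N.sub_mem hx hv, d - n - l, ?_⟩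
      rw [map_sub, hk, hl, hn, hd]; push_cast; ring
  · rw [hinf]
    exact ⟨h0E, _, hhE, fun h => hhN (h0N h), fun x hx => (hmem x).mp hx⟩

/-- Every odd Niemeier lattice `N` has exactly two even neighbors, both of which
contain the even sublattice `N₀ = {x ∈ N : (x,x) even}`, which has index 2 in `N`. -/
theorem stmt13 {V : Type*} [AddCommGroup V] [Module ℚ V]
    (B : V →ₗ[ℚ] V →ₗ[ℚ] ℚ) (hB : IsPosDefSymm B)
    (N : Submodule ℤ V) (hN : IsOddNiemeier B N) :
    ∃ E₁ E₂ : Submodule ℤ V, E₁ ≠ E₂ ∧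
      IsEvenNeighbor B N E₁ ∧ IsEvenNeighbor B N E₂ ∧
      (∀ E : Submodule ℤ V, IsEvenNeighbor B N E → E = E₁ ∨ E = E₂) ∧
      evenSet B N ⊆ (E₁ : Set V) ∧ evenSet B N ⊆ (E₂ : Set V) ∧
      ∃ a ∈ N, a ∉ evenSet B N ∧ ∀ x ∈ N, x ∈ evenSet B N ∨ x - a ∈ evenSet B N := by
  obtain ⟨hI, hU, hodd, hr⟩ := hN
  have hfd : FiniteDimensional ℚ V := Module.finite_of_finrank_pos (by omega)
  obtain ⟨w, hwN, hw⟩ := aux_char B hB N hI hU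
  obtain ⟨v, hv, n, hn⟩ := id hodd
  have hw'N : w + (2 : ℤ) • v ∈ N := N.add_mem hwN (N.smul_mem _ hv)
  have hw' : ∀ x ∈ N, ∃ k : ℤ, B (w + (2 : ℤ) • v) x = B x x + 2 * k := by
    intro x hx
    obtain ⟨k, hk⟩ := hw x hx
    obtain ⟨l, hl⟩ := hI.integral hv _ hx
    refine ⟨k + l, ?_⟩
    rw [← Int.cast_smul_eq_zsmul ℚ]
    simp only [map_add, map_smul, LinearMap.add_apply, LinearMap.smul_apply, smul_eq_mul, hk, hl]
    push_cast
    ring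
  have hww := aux_blij B hB N hI hU hr w hw
  have hww' := aux_blij B hB N hI hU hr _ hw'
  have n1 := evenNb_isEvenNeighbor B hB.1 N hI hU hodd w hwN hw hww
  have n2 := evenNb_isEvenNeighbor B hB.1 N hI hU hodd _ hw'N hw' hww'
  have s1 := evenSub_eq B N w hw
  have s2 := evenSub_eq B N _ hw'
  have s12 : evenSub B N (w + (2 : ℤ) • v) = evenSub B N w := SetLike.coe_injective (by rw [s1, s2])
  have m1 := mem_evenNb B N w hwN hww
  have m2 := mem_evenNb B N _ hw'N hww'
  rw [s12] at m2
  have hhalf : (1 / 2 : ℚ) • (w + (2 : ℤ) • v) = (1 / 2 : ℚ) • w + v := by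
    rw [← Int.cast_smul_eq_zsmul ℚ, smul_add, smul_smul]
    norm_num
  rw [hhalf] at m2
  have hdual := aux_dual B hB.1 N hI hU hodd w hwN hw
  have hvodd : v ∉ evenSet B N := by
    rintro ⟨_, k, hk⟩
    rw [hn] at hk
    have : 2 * n + 1 = 2 * k := by exact_mod_cast hk
    omega
  have hv0 : v ∉ evenSub B N w := by
    intro h
    apply hvodd
    rw [← s1]
    exact h
  have hsplit : ∀ x ∈ N, x ∈ evenSub B N w ∨ x - v ∈ evenSub B N w := by
    intro x hx
    obtain ⟨k, hk⟩ := hI.integral hwN _ hx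
    obtain ⟨l, hl⟩ := hw v hv
    obtain ⟨d, hd | hd⟩ := Int.even_or_odd' k
    · left; exact ⟨hx, d, by rw [hk, hd]; push_cast; ring⟩
    · right
      refine ⟨N.sub_mem hx hv, d - n - l, ?_⟩
      rw [map_sub, hk, hl, hn, hd]; push_cast; ring
  have hhN : (1 / 2 : ℚ) • w ∉ N := by
    intro h
    obtain ⟨k, hk⟩ := hI.integral h _ hv
    rw [map_smul, LinearMap.smul_apply, smul_eq_mul] at hk
    exact hv0 ⟨hv, k, by linarith⟩
  refine ⟨evenNb B N w, evenNb B N (w + (2 : ℤ) • v), ?_, n1, n2, ?_, ?_, ?_, v, hv, hvodd, ?_⟩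
  · intro heq
    have h : (1 / 2 : ℚ) • w + v ∈ evenNb B N (w + (2 : ℤ) • v) := (m2 _).mpr (Or.inr (by simp))
    rw [← heq] at h
    rcases (m1 _).mp h with h | h
    · apply hhN
      have := N.sub_mem h.1 hv
      simpa using this
    · apply hv0
      simpa using h
  · intro E hE
    obtain ⟨hEI, hEU, hEe, ⟨hle, a, haN, haD, hac⟩, ⟨hle', b, hbE, hbD, hbc⟩⟩ := hE
    -- the intersection lies in the even sublattice
    have hD : N ⊓ E ≤ evenSub B N w := by
      rintro x ⟨hx, hxE⟩
      have : x ∈ evenSet B N := ⟨hx, hEe x hxE⟩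
      rw [← s1] at this
      exact this
    have h0E : evenSub B N w ≤ E := by
      intro x hx
      rcases hac x hx.1 with h | h
      · exact h.2
      · exfalso
        rcases hac v hv with h' | h'
        · exact hv0 (hD h')
        · apply hv0
          have := sub_mem hx (hD (sub_mem h h'))
          simpa using this
    have hbN : b ∉ N := fun h => hbD ⟨h, hbE⟩
    have hb : b - (1 / 2 : ℚ) • w ∈ N := by
      rcases hdual b (fun x hx => hEI.integral hbE x (h0E hx)) with h | h
      · exact absurd h hbN
      · exact h
    have hfinal : ∀ F : Submodule ℤ V, IsUnimodular B F → F ≤ E → E = F := by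
      intro F hF hFE
      refine le_antisymm ?_ hFE
      intro x hx
      rw [hF]
      intro y hy
      exact hEI.integral hx y (hFE hy)
    rcases hsplit _ hb with h | h
    · left
      apply hfinal _ n1.2.1
      have hhE : (1 / 2 : ℚ) • w ∈ E := by
        have := sub_mem hbE (h0E h)
        simpa using this
      intro x hx
      rcases (m1 x).mp hx with h' | h'
      · exact h0E h'
      · have := add_mem (h0E h') hhE
        simpa using this
    · right
      apply hfinal _ n2.2.1
      have hhE : (1 / 2 : ℚ) • w + v ∈ E := by
        have := sub_mem hbE (h0E h)
        have e : b - (b - (1 / 2 : ℚ) • w - v) = (1 / 2 : ℚ) • w + v := by abel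
        rwa [e] at this
      intro x hx
      rcases (m2 x).mp hx with h' | h'
      · exact h0E h'
      · have := add_mem (h0E h') hhE
        rwa [sub_add_cancel] at this
  · rw [← s1]
    exact fun x hx => Submodule.mem_sup_left hx
  · rw [← s2]
    exact fun x hx => Submodule.mem_sup_left hx
  · intro x hx
    rw [← s1]
    exact hsplit x hx

end Niemeier
end
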